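/- Fix Ω₁ > 0 and 0 < α < 2, set Ω(ε) = Ω₁/ε^{1+α}, α′ = min(α, 2 − α), and T′_ε = {x ∈ B₁ : |x| ≤ 1 − ε^{α′/4}}. There exist constants C = C(Ω₁) > 0, C′ = C′(Ω₁) > 0 and ε₀ > 0 such that for all 0 < ε < ε₀, every GP minimizer Ψ of E^GP_{ε,Ω(ε)}, and every x ∈ T′_ε, |Ψ(x)|² ≤ C ε^{α′/3} |log ε| · exp(−C′ dist(x, ∂T′_ε)² / ε^{1+α′/2}); i.e., the density is exponentially small everywhere except in a thin boundary layer. -/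

import Mathlib

open MeasureTheory Real Filter

noncomputable section

/-- Points of the plane. -/
abbrev Pt : Type := EuclideanSpace ℝ (Fin 2)

/-- The open unit disc. -/
def B1 : Set Pt := Metric.ball 0 1

/-- First partial derivative of a complex-valued function. -/
def pd1 (Ψ : Pt → ℂ) (x : Pt) : ℂ := fderiv ℝ Ψ x (EuclideanSpace.single 0 1)

/-- Second partial derivative of a complex-valued function. -/
def pd2 (Ψ : Pt → ℂ) (x : Pt) : ℂ := fderiv ℝ Ψ x (EuclideanSpace.single 1 1)

/-- Angular momentum operator `L = -i (x₁ ∂₂ - x₂ ∂₁)`. -/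
def angMom (Ψ : Pt → ℂ) (x : Pt) : ℂ :=
  -Complex.I * ((x 0 : ℂ) * pd2 Ψ x - (x 1 : ℂ) * pd1 Ψ x)

/-- The Gross-Pitaevskii energy density `|∇Ψ|² - Ω conj(Ψ) LΨ + |Ψ|⁴/ε²`. -/
def gpDensity (ε Ω : ℝ) (Ψ : Pt → ℂ) (x : Pt) : ℝ :=
  ‖pd1 Ψ x‖ ^ 2 + ‖pd2 Ψ x‖ ^ 2
    - Ω * (starRingEnd ℂ (Ψ x) * angMom Ψ x).re
    + ‖Ψ x‖ ^ 4 / ε ^ 2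

/-- The Gross-Pitaevskii functional on the unit disc. -/
def gpEnergy (ε Ω : ℝ) (Ψ : Pt → ℂ) : ℝ := ∫ x in B1, gpDensity ε Ω Ψ x

/-- Admissible (H¹, normalized) wave functions. -/
def gpAdm (Ψ : Pt → ℂ) : Prop :=
  DifferentiableOn ℝ Ψ B1 ∧
  IntegrableOn (fun x => ‖Ψ x‖ ^ 2) B1 ∧
  IntegrableOn (fun x => ‖pd1 Ψ x‖ ^ 2 + ‖pd2 Ψ x‖ ^ 2) B1 ∧
  IntegrableOn (fun x => ‖Ψ x‖ ^ 4) B1 ∧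
  IntegrableOn (fun x => (starRingEnd ℂ (Ψ x) * angMom Ψ x).re) B1 ∧
  (∫ x in B1, ‖Ψ x‖ ^ 2) = 1

/-- The GP ground-state energy: infimum of the functional over normalized functions. -/
def gpGround (ε Ω : ℝ) : ℝ := sInf {E | ∃ Ψ : Pt → ℂ, gpAdm Ψ ∧ E = gpEnergy ε Ω Ψ}

/-- A GP minimizer: a normalized admissible function attaining the infimum. -/
def IsGPMinimizer (ε Ω : ℝ) (Ψ : Pt → ℂ) : Prop :=
  gpAdm Ψ ∧ gpEnergy ε Ω Ψ = gpGround ε Ω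

/-- The Thomas-Fermi functional. -/
def tfEnergy (Ω₀ : ℝ) (ρ : Pt → ℝ) : ℝ :=
  ∫ x in B1, ((ρ x) ^ 2 - Ω₀ ^ 2 * ‖x‖ ^ 2 * ρ x / 4)

/-- Admissible TF densities: nonnegative, in L²(B₁), of total mass one. -/
def tfAdm (ρ : Pt → ℝ) : Prop :=
  IntegrableOn ρ B1 ∧ IntegrableOn (fun x => (ρ x) ^ 2) B1 ∧
  (∀ᵐ x ∂(volume.restrict B1), 0 ≤ ρ x) ∧ (∫ x in B1, ρ x) = 1

/-- The TF ground-state energy. -/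
def tfGround (Ω₀ : ℝ) : ℝ := sInf {E | ∃ ρ : Pt → ℝ, tfAdm ρ ∧ E = tfEnergy Ω₀ ρ}

/-- Radius of the TF "hole". -/
def R0 (Ω₀ : ℝ) : ℝ := Real.sqrt (1 - 4 / (Real.sqrt π * Ω₀))

/-- The TF minimizer. -/
def rhoTF (Ω₀ : ℝ) (x : Pt) : ℝ :=
  if Ω₀ ≤ 4 / Real.sqrt π then 1 / π - Ω₀ ^ 2 / 16 * (1 - 2 * ‖x‖ ^ 2)
  else max 0 (Ω₀ ^ 2 / 8 * (‖x‖ ^ 2 - 1) + Ω₀ / (2 * Real.sqrt π))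

/-- Inner radius of the support of the TF minimizer in the rapid-rotation regime. -/
def Reps (Ω₁ α ε : ℝ) : ℝ := Real.sqrt (1 - 4 * ε ^ α / (Real.sqrt π * Ω₁))

/-- The TF minimizer in the rapid-rotation regime. -/
def rhoTFeps (Ω₁ α ε : ℝ) (x : Pt) : ℝ :=
  Ω₁ ^ 2 / (8 * ε ^ (2 * α)) * max 0 (‖x‖ ^ 2 - (Reps Ω₁ α ε) ^ 2)

/-- The TF functional of the rapid-rotation regime. -/
def tfEpsEnergy (Ω₁ α ε : ℝ) (ρ : Pt → ℝ) : ℝ :=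
  ε ^ (2 * α) * ∫ x in B1, ((ρ x) ^ 2 - Ω₁ ^ 2 * ‖x‖ ^ 2 * ρ x / (4 * ε ^ (2 * α)))

lemma norm_sq_pt (x : Pt) : ‖x‖ ^ 2 = x 0 ^ 2 + x 1 ^ 2 := by
  rw [EuclideanSpace.real_norm_sq_eq]; simp

lemma pw_diamagnetic (Ω : ℝ) (Ψ : Pt → ℂ) (x : Pt) :
    Ω * (starRingEnd ℂ (Ψ x) * angMom Ψ x).re ≤
      ‖pd1 Ψ x‖ ^ 2 + ‖pd2 Ψ x‖ ^ 2 + Ω ^ 2 * ‖x‖ ^ 2 / 4 * ‖Ψ x‖ ^ 2 := by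
  unfold angMom
  rw [norm_sq_pt]
  simp only [← Complex.normSq_eq_norm_sq, Complex.normSq_apply]
  generalize Ψ x = a
  generalize pd1 Ψ x = b
  generalize pd2 Ψ x = c
  simp
  nlinarith [sq_nonneg (c.im - Ω / 2 * a.re * x 0), sq_nonneg (b.im + Ω / 2 * a.re * x 1),
    sq_nonneg (c.re + Ω / 2 * a.im * x 0), sq_nonneg (b.re - Ω / 2 * a.im * x 1)]

lemma B1_meas : MeasurableSet B1 := by unfold B1; exact measurableSet_ball
lemma B1_open : IsOpen B1 := by unfold B1; exact Metric.isOpen_ball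
lemma mem_B1 {x : Pt} : x ∈ B1 ↔ ‖x‖ < 1 := by simp [B1]

lemma energy_lower (ε Ω : ℝ) (Ψ : Pt → ℂ) (h : gpAdm Ψ) :
    -(Ω ^ 2 / 4) + (∫ x in B1, ‖Ψ x‖ ^ 4) / ε ^ 2 ≤ gpEnergy ε Ω Ψ := by
  obtain ⟨hd, hU, hT, hQ, hJ, h1⟩ := h
  have : -(Ω ^ 2 / 4) + (∫ x in B1, ‖Ψ x‖ ^ 4) / ε ^ 2 =
      ∫ x in B1, (-(Ω ^ 2 / 4) * ‖Ψ x‖ ^ 2 + ‖Ψ x‖ ^ 4 / ε ^ 2) := by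
    rw [integral_add (hU.const_mul _) (hQ.div_const _), integral_const_mul, integral_div, h1]
    ring
  rw [this, gpEnergy]
  apply setIntegral_mono_on ((hU.const_mul _).add (hQ.div_const _)) _ B1_meas
  · intro x hx
    simp only [Pi.add_apply, gpDensity]
    have := pw_diamagnetic Ω Ψ x
    rw [mem_B1] at hx
    have h2 : ‖x‖ ^ 2 ≤ 1 := by nlinarith [norm_nonneg x]
    have h3 : Ω ^ 2 * ‖x‖ ^ 2 / 4 * ‖Ψ x‖ ^ 2 ≤ Ω ^ 2 * 1 / 4 * ‖Ψ x‖ ^ 2 := by gcongr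
    linarith
  · exact ((hT.sub (hJ.const_mul _)).add (hQ.div_const _))

lemma ground_le (ε Ω : ℝ) (Ψ : Pt → ℂ) (h : gpAdm Ψ) : gpGround ε Ω ≤ gpEnergy ε Ω Ψ := by
  apply csInf_le
  · refine ⟨-(Ω ^ 2 / 4), ?_⟩
    rintro E ⟨Φ, hΦ, rfl⟩
    have := energy_lower ε Ω Φ hΦ
    have h2 : 0 ≤ (∫ x in B1, ‖Φ x‖ ^ 4) / ε ^ 2 := by
      apply div_nonneg _ (sq_nonneg _)
      exact integral_nonneg fun x => by positivity
    linarith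
  · exact ⟨Ψ, h, rfl⟩

/-- partial derivative of density -/
def dU1 (Ψ : Pt → ℂ) (x : Pt) : ℝ := 2 * (starRingEnd ℂ (Ψ x) * pd1 Ψ x).re
def dU2 (Ψ : Pt → ℂ) (x : Pt) : ℝ := 2 * (starRingEnd ℂ (Ψ x) * pd2 Ψ x).re

lemma re_bound (a b : ℂ) : |2 * (starRingEnd ℂ a * b).re| ≤ ‖a‖ ^ 2 + ‖b‖ ^ 2 := by
  rw [abs_mul, abs_two]
  have := Complex.abs_re_le_norm (starRingEnd ℂ a * b)
  rw [norm_mul, Complex.norm_conj] at this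
  nlinarith [sq_nonneg (‖a‖ - ‖b‖)]

lemma meas_pd1 (Ψ : Pt → ℂ) : Measurable (pd1 Ψ) := measurable_fderiv_apply_const ℝ Ψ _
lemma meas_pd2 (Ψ : Pt → ℂ) : Measurable (pd2 Ψ) := measurable_fderiv_apply_const ℝ Ψ _

lemma aesm_psi {Ψ : Pt → ℂ} (h : DifferentiableOn ℝ Ψ B1) :
    AEStronglyMeasurable Ψ (volume.restrict B1) :=
  h.continuousOn.aestronglyMeasurable B1_meas

lemma int_dU1 {Ψ : Pt → ℂ} (h : gpAdm Ψ) : IntegrableOn (dU1 Ψ) B1 := by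
  obtain ⟨hd, hU, hT, -⟩ := h
  refine Integrable.mono' (hU.add hT) ?_ ?_
  · have := aesm_psi hd
    have h2 := (meas_pd1 Ψ).aestronglyMeasurable (μ := volume.restrict B1)
    unfold dU1
    exact (Complex.continuous_re.comp_aestronglyMeasurable
      ((Complex.continuous_conj.comp_aestronglyMeasurable this).mul h2)).const_mul 2
  · refine Eventually.of_forall fun x => ?_
    have := re_bound (Ψ x) (pd1 Ψ x)
    simp only [dU1, Real.norm_eq_abs, Pi.add_apply]
    nlinarith [sq_nonneg ‖pd2 Ψ x‖]

lemma int_dU2 {Ψ : Pt → ℂ} (h : gpAdm Ψ) : IntegrableOn (dU2 Ψ) B1 := by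
  obtain ⟨hd, hU, hT, -⟩ := h
  refine Integrable.mono' (hU.add hT) ?_ ?_
  · have := aesm_psi hd
    have h2 := (meas_pd2 Ψ).aestronglyMeasurable (μ := volume.restrict B1)
    unfold dU2
    exact (Complex.continuous_re.comp_aestronglyMeasurable
      ((Complex.continuous_conj.comp_aestronglyMeasurable this).mul h2)).const_mul 2
  · refine Eventually.of_forall fun x => ?_
    have := re_bound (Ψ x) (pd2 Ψ x)
    simp only [dU2, Real.norm_eq_abs, Pi.add_apply]
    nlinarith [sq_nonneg ‖pd1 Ψ x‖]

/-- partial derivatives of real functions -/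
def rd (i : Fin 2) (g : Pt → ℝ) (x : Pt) : ℝ := fderiv ℝ g x (EuclideanSpace.single i 1)

lemma meas_rd (i : Fin 2) (g : Pt → ℝ) : Measurable (rd i g) := measurable_fderiv_apply_const ℝ g _

lemma int_mul_bdd {f g : Pt → ℝ} {M : ℝ} (hf : IntegrableOn f B1) (hg : Measurable g)
    (hM : ∀ x, |g x| ≤ M) : IntegrableOn (fun x => g x * f x) B1 := by
  exact Integrable.bdd_mul hf hg.aestronglyMeasurable (Eventually.of_forall hM)

structure GoodMul (g : Pt → ℝ) (M : ℝ) : Prop where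
  diff : Differentiable ℝ g
  b : ∀ x, |g x| ≤ M
  b0 : ∀ x, |rd 0 g x| ≤ M
  b1 : ∀ x, |rd 1 g x| ≤ M

def mulΨ (g : Pt → ℝ) (Ψ : Pt → ℂ) : Pt → ℂ := fun x => (g x : ℂ) * Ψ x

lemma fderiv_mulΨ {g : Pt → ℝ} {Ψ : Pt → ℂ} {x : Pt} (hg : DifferentiableAt ℝ g x)
    (hΨ : DifferentiableAt ℝ Ψ x) (v : Pt) :
    fderiv ℝ (mulΨ g Ψ) x v = (g x : ℂ) * fderiv ℝ Ψ x v + (fderiv ℝ g x v : ℂ) * Ψ x := by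
  have h : HasFDerivAt (fun y => g y • Ψ y) _ x := hg.hasFDerivAt.smul hΨ.hasFDerivAt
  have e : mulΨ g Ψ = fun y => g y • Ψ y := by ext y; simp [mulΨ]
  rw [e, h.fderiv]
  simp

lemma dens_T (g a0 a1 : ℝ) (z p q : ℂ) :
    ‖(g : ℂ) * p + (a0 : ℂ) * z‖ ^ 2 + ‖(g : ℂ) * q + (a1 : ℂ) * z‖ ^ 2 =
     g ^ 2 * (‖p‖ ^ 2 + ‖q‖ ^ 2) + g * (a0 * (2 * (starRingEnd ℂ z * p).re)
      + a1 * (2 * (starRingEnd ℂ z * q).re)) + (a0 ^ 2 + a1 ^ 2) * ‖z‖ ^ 2 := by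
  simp only [← Complex.normSq_eq_norm_sq, Complex.normSq_apply]
  simp
  ring

lemma dens_J (g a0 a1 u v : ℝ) (z p q : ℂ) :
   (starRingEnd ℂ ((g : ℂ) * z) * (-Complex.I * ((u : ℂ) * ((g : ℂ) * q + (a1 : ℂ) * z) -
    (v : ℂ) * ((g : ℂ) * p + (a0 : ℂ) * z)))).re =
    g ^ 2 * (starRingEnd ℂ z * (-Complex.I * ((u : ℂ) * q - (v : ℂ) * p))).re := by
  simp
  ring

lemma mul_adm {Ψ : Pt → ℂ} (h : gpAdm Ψ) {g : Pt → ℝ} {M : ℝ} (hg : GoodMul g M)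
    (hn : ∫ x in B1, g x ^ 2 * ‖Ψ x‖ ^ 2 = 1) (ε Ω : ℝ) :
    gpAdm (mulΨ g Ψ) ∧ gpEnergy ε Ω (mulΨ g Ψ) =
      ∫ x in B1, (g x ^ 2 * (‖pd1 Ψ x‖ ^ 2 + ‖pd2 Ψ x‖ ^ 2 -
        Ω * (starRingEnd ℂ (Ψ x) * angMom Ψ x).re)
        + g x * (rd 0 g x * dU1 Ψ x + rd 1 g x * dU2 Ψ x)
        + (rd 0 g x ^ 2 + rd 1 g x ^ 2) * ‖Ψ x‖ ^ 2 + g x ^ 4 * ‖Ψ x‖ ^ 4 / ε ^ 2) := by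
  have i1 := int_dU1 h
  have i2 := int_dU2 h
  obtain ⟨hd, hU, hT, hQ, hJ, h1⟩ := h
  have hdx : ∀ x ∈ B1, DifferentiableAt ℝ Ψ x := fun x hx => hd.differentiableAt (B1_open.mem_nhds hx)
  have gm := hg.diff.continuous.measurable
  have hp1 : ∀ x ∈ B1, pd1 (mulΨ g Ψ) x = (g x : ℂ) * pd1 Ψ x + (rd 0 g x : ℂ) * Ψ x :=
    fun x hx => fderiv_mulΨ (hg.diff x) (hdx x hx) _
  have hp2 : ∀ x ∈ B1, pd2 (mulΨ g Ψ) x = (g x : ℂ) * pd2 Ψ x + (rd 1 g x : ℂ) * Ψ x :=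
    fun x hx => fderiv_mulΨ (hg.diff x) (hdx x hx) _
  have hTT : ∀ x ∈ B1, ‖pd1 (mulΨ g Ψ) x‖ ^ 2 + ‖pd2 (mulΨ g Ψ) x‖ ^ 2 =
     g x ^ 2 * (‖pd1 Ψ x‖ ^ 2 + ‖pd2 Ψ x‖ ^ 2) + g x * (rd 0 g x * dU1 Ψ x + rd 1 g x * dU2 Ψ x)
        + (rd 0 g x ^ 2 + rd 1 g x ^ 2) * ‖Ψ x‖ ^ 2 := by
    intro x hx
    rw [hp1 x hx, hp2 x hx, dens_T]; rfl
  have hJJ : ∀ x ∈ B1, (starRingEnd ℂ (mulΨ g Ψ x) * angMom (mulΨ g Ψ) x).re =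
      g x ^ 2 * (starRingEnd ℂ (Ψ x) * angMom Ψ x).re := by
    intro x hx
    unfold angMom
    rw [hp1 x hx, hp2 x hx, mulΨ, dens_J]
  have hUU : ∀ x, ‖mulΨ g Ψ x‖ ^ 2 = g x ^ 2 * ‖Ψ x‖ ^ 2 := by
    intro x; simp [mulΨ, mul_pow]
  have hQQ : ∀ x, ‖mulΨ g Ψ x‖ ^ 4 = g x ^ 4 * ‖Ψ x‖ ^ 4 := by
    intro x
    have := hUU x
    calc ‖mulΨ g Ψ x‖ ^ 4 = (‖mulΨ g Ψ x‖ ^ 2) ^ 2 := by ring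
      _ = _ := by rw [this]; ring
  have M0 : 0 ≤ M := (abs_nonneg _).trans (hg.b 0)
  have bp : ∀ x (n : ℕ), |g x ^ n| ≤ M ^ n := by
    intro x n; rw [abs_pow]; exact pow_le_pow_left₀ (abs_nonneg _) (hg.b x) n
  have I1 : IntegrableOn (fun x => g x ^ 2 * (‖pd1 Ψ x‖ ^ 2 + ‖pd2 Ψ x‖ ^ 2)) B1 :=
    int_mul_bdd hT (gm.pow_const 2) (fun x => bp x 2)
  have I2 : IntegrableOn (fun x => g x * (rd 0 g x * dU1 Ψ x + rd 1 g x * dU2 Ψ x)) B1 :=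
    int_mul_bdd ((int_mul_bdd i1 (meas_rd 0 g) hg.b0).add (int_mul_bdd i2 (meas_rd 1 g) hg.b1)) gm hg.b
  have I3 : IntegrableOn (fun x => (rd 0 g x ^ 2 + rd 1 g x ^ 2) * ‖Ψ x‖ ^ 2) B1 := by
    refine int_mul_bdd (M := M ^ 2 + M ^ 2) hU (((meas_rd 0 g).pow_const 2).add ((meas_rd 1 g).pow_const 2)) ?_
    intro x
    rw [abs_of_nonneg (by positivity)]
    exact add_le_add (sq_le_sq' (abs_le.1 (hg.b0 x)).1 (abs_le.1 (hg.b0 x)).2)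
      (sq_le_sq' (abs_le.1 (hg.b1 x)).1 (abs_le.1 (hg.b1 x)).2)
  refine ⟨⟨?_, ?_, ?_, ?_, ?_, ?_⟩, ?_⟩
  · intro x hx
    have : DifferentiableAt ℝ (fun y => g y • Ψ y) x := (hg.diff x).smul (hdx x hx)
    have e : (fun y => g y • Ψ y) = mulΨ g Ψ := by ext y; simp [mulΨ]
    rw [e] at this
    exact this.differentiableWithinAt
  · simp only [hUU]
    exact int_mul_bdd hU (gm.pow_const 2) (fun x => bp x 2)
  · refine IntegrableOn.congr_fun ((I1.add I2).add I3) (fun x hx => ?_) B1_meas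
    exact (hTT x hx).symm
  · simp only [hQQ]
    exact int_mul_bdd hQ (gm.pow_const 4) (fun x => bp x 4)
  · refine IntegrableOn.congr_fun (int_mul_bdd hJ (gm.pow_const 2) (fun x => bp x 2)) (fun x hx => ?_) B1_meas
    exact (hJJ x hx).symm
  · simp only [hUU]; exact hn
  · refine setIntegral_congr_fun B1_meas fun x hx => ?_
    simp only [gpDensity]
    rw [hTT x hx, hJJ x hx, hQQ]
    ring

/-- kinetic part of the energy density -/
def kinS (Ω : ℝ) (Ψ : Pt → ℂ) (x : Pt) : ℝ :=
  ‖pd1 Ψ x‖ ^ 2 + ‖pd2 Ψ x‖ ^ 2 - Ω * (starRingEnd ℂ (Ψ x) * angMom Ψ x).re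

lemma iadd {μ : Measure Pt} {a b : Pt → ℝ} (ha : Integrable a μ) (hb : Integrable b μ) :
    Integrable (fun x => a x + b x) μ := ha.add hb

lemma quad_integral {μ : Measure Pt} {a b c : Pt → ℝ} (ha : Integrable a μ) (hb : Integrable b μ)
    (hc : Integrable c μ) (t : ℝ) :
    ∫ x, (a x + t * b x + t ^ 2 * c x) ∂μ = ∫ x, a x ∂μ + t * ∫ x, b x ∂μ + t ^ 2 * ∫ x, c x ∂μ := by
  rw [integral_add (iadd ha (hb.const_mul t)) (hc.const_mul _), integral_add ha (hb.const_mul t),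
    integral_const_mul, integral_const_mul]

lemma poly_crit {E A B D n1 n2 q0 q1 q2 q3 q4 : ℝ} (hE : E = A + q0)
    (h : ∀ t : ℝ, 0 < 1 + t * n1 + t ^ 2 * n2 →
      E * (1 + t * n1 + t ^ 2 * n2) ^ 2 ≤ (A + t * B + t ^ 2 * D) * (1 + t * n1 + t ^ 2 * n2) +
        (q0 + t * q1 + t ^ 2 * (q2 + t * q3 + t ^ 2 * q4))) :
    B + q1 = (A + 2 * q0) * n1 := by
  set f : ℝ → ℝ := fun t => (A + t * B + t ^ 2 * D) * (1 + t * n1 + t ^ 2 * n2) +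
        (q0 + t * q1 + t ^ 2 * (q2 + t * q3 + t ^ 2 * q4)) - E * (1 + t * n1 + t ^ 2 * n2) ^ 2 with hf
  have h0 : f 0 = 0 := by simp [hf, hE]
  have hmin : IsLocalMin f 0 := by
    have : ∀ᶠ t in nhds (0 : ℝ), 0 < 1 + t * n1 + t ^ 2 * n2 := by
      have hc : ContinuousAt (fun t : ℝ => 1 + t * n1 + t ^ 2 * n2) 0 := by fun_prop
      exact hc.eventually (lt_mem_nhds (by simp))
    filter_upwards [this] with t ht
    rw [h0]
    have := h t ht
    simp only [hf]; linarith
  have hl : ∀ (a b c : ℝ), HasDerivAt (fun t : ℝ => a + t * b + t ^ 2 * c) b 0 := by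
    intro a b c
    have := (((hasDerivAt_id (0:ℝ)).mul_const b).const_add a).add (((hasDerivAt_id (0:ℝ)).pow 2).mul_const c)
    refine HasDerivAt.congr_deriv (f := fun t : ℝ => a + t * b + t ^ 2 * c) this ?_
    simp
  have hl2 : HasDerivAt (fun t : ℝ => q0 + t * q1 + t ^ 2 * (q2 + t * q3 + t ^ 2 * q4)) q1 0 := by
    have := (((hasDerivAt_id (0:ℝ)).mul_const q1).const_add q0).add (((hasDerivAt_id (0:ℝ)).pow 2).mul (hl q2 q3 q4))
    refine HasDerivAt.congr_deriv
      (f := fun t : ℝ => q0 + t * q1 + t ^ 2 * (q2 + t * q3 + t ^ 2 * q4)) this ?_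
    simp
  have hd := (((hl A B D).mul (hl 1 n1 n2)).add hl2).sub (((hl 1 n1 n2).pow 2).const_mul E)
  have := hmin.hasDerivAt_eq_zero hd
  simp at this
  rw [hE] at this
  linarith

lemma goodMul_affine {η : Pt → ℝ} {M : ℝ} (hη : GoodMul η M) (l t : ℝ) :
    (∀ i x, rd i (fun x => l * (1 + t * η x)) x = l * (t * rd i η x)) ∧
    GoodMul (fun x => l * (1 + t * η x)) (|l| * (1 + |t| * M)) := by
  have hr : ∀ i x, rd i (fun x => l * (1 + t * η x)) x = l * (t * rd i η x) := by
    intro i x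
    have : HasFDerivAt (fun x => l * (1 + t * η x)) (l • (t • fderiv ℝ η x)) x :=
      (((hη.diff x).hasFDerivAt.const_mul t).const_add 1).const_mul l
    rw [rd, this.fderiv]
    simp [rd]
  have M0 : 0 ≤ M := (abs_nonneg _).trans (hη.b 0)
  refine ⟨hr, ⟨?_, ?_, ?_, ?_⟩⟩
  · have := hη.diff
    fun_prop
  · intro x
    rw [abs_mul]
    gcongr
    refine (abs_add_le _ _).trans ?_
    rw [abs_mul, abs_one]
    have := hη.b x
    gcongr
  · intro x
    rw [hr, abs_mul, abs_mul]
    have := hη.b0 x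
    gcongr
    nlinarith [mul_le_mul_of_nonneg_left this (abs_nonneg t)]
  · intro x
    rw [hr, abs_mul, abs_mul]
    have := hη.b1 x
    gcongr
    nlinarith [mul_le_mul_of_nonneg_left this (abs_nonneg t)]

lemma first_variation {ε Ω : ℝ} {Ψ : Pt → ℂ} (h : IsGPMinimizer ε Ω Ψ) {η : Pt → ℝ} {M : ℝ}
    (hη : GoodMul η M) :
    (∫ x in B1, (2 * (η x * kinS Ω Ψ x) + (rd 0 η x * dU1 Ψ x + rd 1 η x * dU2 Ψ x)))
      + 4 * (∫ x in B1, η x * ‖Ψ x‖ ^ 4) / ε ^ 2 =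
    (gpEnergy ε Ω Ψ + (∫ x in B1, ‖Ψ x‖ ^ 4) / ε ^ 2) * (2 * ∫ x in B1, η x * ‖Ψ x‖ ^ 2) := by
  obtain ⟨hadm, hE⟩ := h
  have i1 := int_dU1 hadm
  have i2 := int_dU2 hadm
  have hadm' := hadm
  obtain ⟨hd, hU, hT, hQ, hJ, h1⟩ := hadm'
  have hS : IntegrableOn (kinS Ω Ψ) B1 := hT.sub (hJ.const_mul _)
  have gm := hη.diff.continuous.measurable
  have M0 : 0 ≤ M := (abs_nonneg _).trans (hη.b 0)
  have bp : ∀ x (n : ℕ), |η x ^ n| ≤ M ^ n := by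
    intro x n; rw [abs_pow]; exact pow_le_pow_left₀ (abs_nonneg _) (hη.b x) n
  have pw : ∀ {f : Pt → ℝ} (n : ℕ), IntegrableOn f B1 → IntegrableOn (fun x => η x ^ n * f x) B1 :=
    fun n hf => int_mul_bdd hf (gm.pow_const n) (fun x => bp x n)
  have p1 : ∀ {f : Pt → ℝ}, IntegrableOn f B1 → IntegrableOn (fun x => η x * f x) B1 :=
    fun hf => int_mul_bdd hf gm hη.b
  have hW : IntegrableOn (fun x => rd 0 η x * dU1 Ψ x + rd 1 η x * dU2 Ψ x) B1 :=
    (int_mul_bdd i1 (meas_rd 0 η) hη.b0).add (int_mul_bdd i2 (meas_rd 1 η) hη.b1)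
  have hR : IntegrableOn (fun x => (rd 0 η x ^ 2 + rd 1 η x ^ 2) * ‖Ψ x‖ ^ 2) B1 := by
    refine int_mul_bdd (M := M ^ 2 + M ^ 2) hU (((meas_rd 0 η).pow_const 2).add ((meas_rd 1 η).pow_const 2)) ?_
    intro x
    rw [abs_of_nonneg (by positivity)]
    exact add_le_add (sq_le_sq' (abs_le.1 (hη.b0 x)).1 (abs_le.1 (hη.b0 x)).2)
      (sq_le_sq' (abs_le.1 (hη.b1 x)).1 (abs_le.1 (hη.b1 x)).2)
  -- polynomial expansions
  have N_eq : ∀ t : ℝ, ∫ x in B1, (1 + t * η x) ^ 2 * ‖Ψ x‖ ^ 2 =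
      1 + t * (2 * ∫ x in B1, η x * ‖Ψ x‖ ^ 2) + t ^ 2 * ∫ x in B1, η x ^ 2 * ‖Ψ x‖ ^ 2 := by
    intro t
    have e := quad_integral hU ((p1 hU).const_mul 2) (pw 2 hU) t
    rw [h1, integral_const_mul] at e
    rw [← e]
    congr 1; ext x; ring
  have G_eq : ∀ t : ℝ, ∫ x in B1, ((1 + t * η x) ^ 2 * kinS Ω Ψ x +
        (1 + t * η x) * (t * (rd 0 η x * dU1 Ψ x + rd 1 η x * dU2 Ψ x)) +
        t ^ 2 * ((rd 0 η x ^ 2 + rd 1 η x ^ 2) * ‖Ψ x‖ ^ 2)) =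
      (∫ x in B1, kinS Ω Ψ x) + t * (∫ x in B1, (2 * (η x * kinS Ω Ψ x) +
        (rd 0 η x * dU1 Ψ x + rd 1 η x * dU2 Ψ x))) +
      t ^ 2 * ∫ x in B1, (η x ^ 2 * kinS Ω Ψ x + η x * (rd 0 η x * dU1 Ψ x + rd 1 η x * dU2 Ψ x) +
        (rd 0 η x ^ 2 + rd 1 η x ^ 2) * ‖Ψ x‖ ^ 2) := by
    intro t
    rw [← quad_integral hS (iadd ((p1 hS).const_mul 2) hW) (iadd (iadd (pw 2 hS) (p1 hW)) hR)]
    congr 1; ext x; ring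
  have Q_eq : ∀ t : ℝ, ∫ x in B1, (1 + t * η x) ^ 4 * ‖Ψ x‖ ^ 4 =
      (∫ x in B1, ‖Ψ x‖ ^ 4) + t * (4 * ∫ x in B1, η x * ‖Ψ x‖ ^ 4) +
      t ^ 2 * ((∫ x in B1, 6 * (η x ^ 2 * ‖Ψ x‖ ^ 4)) + t * (∫ x in B1, 4 * (η x ^ 3 * ‖Ψ x‖ ^ 4))
        + t ^ 2 * ∫ x in B1, η x ^ 4 * ‖Ψ x‖ ^ 4) := by
    intro t
    rw [← integral_const_mul, ← quad_integral ((pw 2 hQ).const_mul 6) ((pw 3 hQ).const_mul 4) (pw 4 hQ),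
      ← quad_integral hQ ((p1 hQ).const_mul 4)
        (iadd (iadd ((pw 2 hQ).const_mul 6) (((pw 3 hQ).const_mul 4).const_mul t)) ((pw 4 hQ).const_mul (t^2)))]
    congr 1; ext x; ring
  have E_eq : gpEnergy ε Ω Ψ = (∫ x in B1, kinS Ω Ψ x) + (∫ x in B1, ‖Ψ x‖ ^ 4) / ε ^ 2 := by
    rw [← integral_div, ← integral_add hS (hQ.div_const _)]
    rfl
  set A := ∫ x in B1, kinS Ω Ψ x
  set B := ∫ x in B1, (2 * (η x * kinS Ω Ψ x) + (rd 0 η x * dU1 Ψ x + rd 1 η x * dU2 Ψ x))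
  set D := ∫ x in B1, (η x ^ 2 * kinS Ω Ψ x + η x * (rd 0 η x * dU1 Ψ x + rd 1 η x * dU2 Ψ x) +
        (rd 0 η x ^ 2 + rd 1 η x ^ 2) * ‖Ψ x‖ ^ 2)
  set n1 := 2 * ∫ x in B1, η x * ‖Ψ x‖ ^ 2
  set n2 := ∫ x in B1, η x ^ 2 * ‖Ψ x‖ ^ 2
  set q0 := ∫ x in B1, ‖Ψ x‖ ^ 4
  set q1 := ∫ x in B1, η x * ‖Ψ x‖ ^ 4
  set q2 := ∫ x in B1, 6 * (η x ^ 2 * ‖Ψ x‖ ^ 4)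
  set q3 := ∫ x in B1, 4 * (η x ^ 3 * ‖Ψ x‖ ^ 4)
  set q4 := ∫ x in B1, η x ^ 4 * ‖Ψ x‖ ^ 4
  have key := poly_crit (E := gpEnergy ε Ω Ψ) (A := A) (B := B) (D := D) (n1 := n1) (n2 := n2)
    (q0 := q0 / ε ^ 2) (q1 := 4 * q1 / ε ^ 2) (q2 := q2 / ε ^ 2) (q3 := q3 / ε ^ 2)
    (q4 := q4 / ε ^ 2) E_eq ?_
  · rw [key, E_eq]; ring
  intro t hN
  rw [← N_eq t] at hN ⊢
  rw [← G_eq t]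
  have Q' : q0 / ε ^ 2 + t * (4 * q1 / ε ^ 2) + t ^ 2 * (q2 / ε ^ 2 + t * (q3 / ε ^ 2) + t ^ 2 * (q4 / ε ^ 2))
      = (∫ x in B1, (1 + t * η x) ^ 4 * ‖Ψ x‖ ^ 4) / ε ^ 2 := by
    rw [Q_eq]; ring
  rw [Q']
  set N := ∫ x in B1, (1 + t * η x) ^ 2 * ‖Ψ x‖ ^ 2 with hNdef
  set l := (Real.sqrt N)⁻¹ with hl
  have hl2 : l ^ 2 = N⁻¹ := by rw [hl, inv_pow, Real.sq_sqrt hN.le]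
  have hl4 : l ^ 4 = (N⁻¹) ^ 2 := by rw [← hl2]; ring
  obtain ⟨hrd, hgood⟩ := goodMul_affine hη l t
  obtain ⟨ad, en⟩ := mul_adm hadm hgood (by
    have : ∀ x, (l * (1 + t * η x)) ^ 2 * ‖Ψ x‖ ^ 2 = l ^ 2 * ((1 + t * η x) ^ 2 * ‖Ψ x‖ ^ 2) := by
      intro x; ring
    simp only [this]
    rw [integral_const_mul, hl2]
    exact inv_mul_cancel₀ hN.ne') ε Ω
  have le := ground_le ε Ω _ ad
  rw [← hE, en] at le
  have pwi : IntegrableOn (fun x => ((1 + t * η x) ^ 2 * kinS Ω Ψ x +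
        (1 + t * η x) * (t * (rd 0 η x * dU1 Ψ x + rd 1 η x * dU2 Ψ x)) +
        t ^ 2 * ((rd 0 η x ^ 2 + rd 1 η x ^ 2) * ‖Ψ x‖ ^ 2))) B1 := by
    have := (hS.add ((((p1 hS).const_mul 2).add hW).const_mul t)).add ((((pw 2 hS).add (p1 hW)).add hR).const_mul (t ^ 2))
    refine this.congr (Eventually.of_forall fun x => ?_)
    simp only [Pi.add_apply]; ring
  have pwq : IntegrableOn (fun x => (1 + t * η x) ^ 4 * ‖Ψ x‖ ^ 4) B1 := by
    have h4 := (goodMul_affine hη 1 t).2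
    simp only [one_mul] at h4
    refine int_mul_bdd (M := (|1| * (1 + |t| * M)) ^ 4) hQ (h4.diff.continuous.measurable.pow_const 4) ?_
    intro x
    rw [abs_pow]; exact pow_le_pow_left₀ (abs_nonneg _) (h4.b x) 4
  have e2 : ∀ x, ((l * (1 + t * η x)) ^ 2 * (‖pd1 Ψ x‖ ^ 2 + ‖pd2 Ψ x‖ ^ 2 -
        Ω * (starRingEnd ℂ (Ψ x) * angMom Ψ x).re)
        + l * (1 + t * η x) * (l * (t * rd 0 η x) * dU1 Ψ x + l * (t * rd 1 η x) * dU2 Ψ x)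
        + ((l * (t * rd 0 η x)) ^ 2 + (l * (t * rd 1 η x)) ^ 2) * ‖Ψ x‖ ^ 2
        + (l * (1 + t * η x)) ^ 4 * ‖Ψ x‖ ^ 4 / ε ^ 2) =
      l ^ 2 * ((1 + t * η x) ^ 2 * kinS Ω Ψ x +
        (1 + t * η x) * (t * (rd 0 η x * dU1 Ψ x + rd 1 η x * dU2 Ψ x)) +
        t ^ 2 * ((rd 0 η x ^ 2 + rd 1 η x ^ 2) * ‖Ψ x‖ ^ 2)) +
      l ^ 4 / ε ^ 2 * ((1 + t * η x) ^ 4 * ‖Ψ x‖ ^ 4) := by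
    intro x; unfold kinS; ring
  simp only [hrd, e2] at le
  rw [integral_add (pwi.const_mul _) (pwq.const_mul _), integral_const_mul, integral_const_mul,
    hl2, hl4] at le
  have := mul_le_mul_of_nonneg_right le (sq_nonneg N)
  refine this.trans (le_of_eq ?_)
  have hN0 := hN.ne'
  generalize (∫ x in B1, (1 + t * η x) ^ 4 * ‖Ψ x‖ ^ 4) = Y
  generalize (∫ x in B1, ((1 + t * η x) ^ 2 * kinS Ω Ψ x +
        (1 + t * η x) * (t * (rd 0 η x * dU1 Ψ x + rd 1 η x * dU2 Ψ x)) +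
        t ^ 2 * ((rd 0 η x ^ 2 + rd 1 η x ^ 2) * ‖Ψ x‖ ^ 2))) = X
  clear_value N
  have e : (N⁻¹ * X + N⁻¹ ^ 2 / ε ^ 2 * Y) * N ^ 2 = (N⁻¹ * N) * (N * X) + (N⁻¹ * N) ^ 2 * (Y / ε ^ 2) := by ring
  rw [e, inv_mul_cancel₀ hN0]; ring

lemma max_pow_deriv (n : ℕ) (t : ℝ) :
    HasDerivAt (fun t : ℝ => (max 0 t) ^ (n + 2)) (((n : ℝ) + 2) * (max 0 t) ^ (n + 1)) t := by
  rcases lt_trichotomy t 0 with h | h | h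
  · have e : (fun t : ℝ => (max 0 t) ^ (n + 2)) =ᶠ[nhds t] fun _ => (0 : ℝ) := by
      filter_upwards [gt_mem_nhds h] with u hu
      rw [max_eq_left hu.le]; simp
    rw [max_eq_left h.le]
    simpa using (hasDerivAt_const t (0 : ℝ)).congr_of_eventuallyEq e
  · subst h
    simp only [max_self, ne_eq, Nat.add_eq_zero_iff, one_ne_zero, and_false, not_false_eq_true,
      zero_pow, mul_zero]
    rw [hasDerivAt_iff_isLittleO]
    simp only [sub_zero, max_self, smul_eq_mul, mul_zero]
    rw [show (0:ℝ) ^ (n + 2) = 0 by simp]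
    simp only [sub_zero]
    refine Asymptotics.IsBigO.trans_isLittleO (g := fun t : ℝ => t ^ (n + 2)) ?_ ?_
    · refine Asymptotics.IsBigO.of_bound 1 (Eventually.of_forall fun u => ?_)
      rw [one_mul, norm_pow, norm_pow]
      gcongr
      rw [Real.norm_eq_abs, Real.norm_eq_abs, abs_of_nonneg (le_max_left _ _)]
      exact max_le (abs_nonneg _) (le_abs_self _)
    · simpa using Asymptotics.isLittleO_pow_id (𝕜 := ℝ) (n := n + 2) (by omega)
  · have e : (fun t : ℝ => (max 0 t) ^ (n + 2)) =ᶠ[nhds t] fun t => t ^ (n + 2) := by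
      filter_upwards [lt_mem_nhds h] with u hu
      rw [max_eq_right hu.le]
    rw [max_eq_right h.le]
    have := (hasDerivAt_pow (n + 2) t).congr_of_eventuallyEq e
    simpa using this

/-- polynomial bump -/
def bump (x0 : Pt) (s : ℝ) (x : Pt) : ℝ := max 0 (s ^ 2 - ‖x - x0‖ ^ 2)

lemma bump_nonneg (x0 : Pt) (s : ℝ) (x : Pt) : 0 ≤ bump x0 s x := le_max_left _ _

lemma bump_le (x0 : Pt) (s : ℝ) (x : Pt) : bump x0 s x ≤ s ^ 2 :=
  max_le (sq_nonneg _) (by nlinarith [sq_nonneg ‖x - x0‖])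

lemma bump_zero {x0 : Pt} {s : ℝ} {x : Pt} (hs : 0 ≤ s) (h : s ≤ ‖x - x0‖) : bump x0 s x = 0 :=
  max_eq_left (by nlinarith)

lemma bump_cont (x0 : Pt) (s : ℝ) : Continuous (bump x0 s) := by unfold bump; fun_prop

lemma bump_mul (x0 : Pt) (s : ℝ) (x : Pt) :
    bump x0 s x * ‖x - x0‖ ^ 2 = bump x0 s x * (s ^ 2 - bump x0 s x) := by
  unfold bump
  rcases le_total 0 (s ^ 2 - ‖x - x0‖ ^ 2) with h | h
  · rw [max_eq_right h]; ring
  · rw [max_eq_left h]; ring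

lemma bump_hasFDeriv (x0 : Pt) (s : ℝ) (n : ℕ) (x : Pt) :
    HasFDerivAt (fun x => bump x0 s x ^ (n + 2))
      ((((n : ℝ) + 2) * bump x0 s x ^ (n + 1)) • (-((2:ℕ) • (innerSL ℝ (x - x0))) : Pt →L[ℝ] ℝ)) x := by
  have h1 : HasFDerivAt (fun x : Pt => s ^ 2 - ‖x - x0‖ ^ 2) (-(2 • (innerSL ℝ (x - x0)))) x := by
    have := ((hasFDerivAt_id x).sub_const x0).norm_sq.const_sub (s ^ 2)
    simpa using this
  exact (max_pow_deriv n _).comp_hasFDerivAt x h1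

lemma inner_single (y : Pt) (i : Fin 2) : innerSL ℝ y (EuclideanSpace.single i 1) = y i := by
  simp [innerSL_apply_apply, EuclideanSpace.inner_single_right]

lemma bump_rd (x0 : Pt) (s : ℝ) (n : ℕ) (i : Fin 2) (x : Pt) :
    rd i (fun x => bump x0 s x ^ (n + 2)) x =
      -2 * ((n : ℝ) + 2) * (bump x0 s x ^ (n + 1) * (x i - x0 i)) := by
  rw [rd, (bump_hasFDeriv x0 s n x).fderiv]
  have := inner_single (x - x0) i
  simp only [_root_.smul_apply, _root_.neg_apply, this]
  simp
  ring

lemma bump_rd2_has (x0 : Pt) (s : ℝ) (n : ℕ) (i : Fin 2) (x : Pt) :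
    DifferentiableAt ℝ (rd i (fun x => bump x0 s x ^ (n + 3))) x ∧
    rd i (rd i (fun x => bump x0 s x ^ (n + 3))) x =
      -2 * ((n : ℝ) + 3) * (bump x0 s x ^ (n + 2) -
        2 * ((n : ℝ) + 2) * (bump x0 s x ^ (n + 1) * (x i - x0 i) ^ 2)) := by
  have e : rd i (fun x => bump x0 s x ^ (n + 3)) = fun x =>
      (-2 * ((n : ℝ) + 3)) * (bump x0 s x ^ (n + 2) * (x i - x0 i)) := by
    ext y
    have := bump_rd x0 s (n + 1) i y
    push_cast at this
    rw [this]; ring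
  have hp : HasFDerivAt (fun x : Pt => x i - x0 i) (EuclideanSpace.proj i : Pt →L[ℝ] ℝ) x :=
    (EuclideanSpace.proj (𝕜 := ℝ) i : Pt →L[ℝ] ℝ).hasFDerivAt.sub_const _
  have := ((bump_hasFDeriv x0 s n x).mul hp).const_mul (-2 * ((n : ℝ) + 3))
  rw [e]
  refine ⟨this.differentiableAt, ?_⟩
  refine (congrArg (fun L : Pt →L[ℝ] ℝ => L (EuclideanSpace.single i 1)) this.fderiv).trans ?_
  have h3 := inner_single (x - x0) i
  simp only [_root_.smul_apply, _root_.neg_apply,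
    _root_.add_apply, h3]
  simp
  left
  ring

lemma bump_coord {x0 : Pt} {s : ℝ} (hs : 0 ≤ s) (n : ℕ) (i : Fin 2) (x : Pt) :
    |bump x0 s x ^ (n + 1) * (x i - x0 i)| ≤ (s ^ 2) ^ (n + 1) * s := by
  rw [abs_mul, abs_of_nonneg (pow_nonneg (bump_nonneg _ _ _) _)]
  rcases le_total s ‖x - x0‖ with h | h
  · rw [bump_zero hs h]; simp; positivity
  · have h1 : |x i - x0 i| ≤ ‖x - x0‖ := by
      have := PiLp.norm_apply_le (x - x0) i
      simpa using this
    have := bump_le x0 s x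
    have := bump_nonneg x0 s x
    gcongr
    exact h1.trans h

lemma bump_good (x0 : Pt) {s : ℝ} (hs : 0 ≤ s) (n : ℕ) :
    ∃ M, GoodMul (fun x => bump x0 s x ^ (n + 2)) M := by
  have hr : ∀ i x, |rd i (fun x => bump x0 s x ^ (n + 2)) x| ≤
      (s ^ 2) ^ (n + 2) + 2 * ((n : ℝ) + 2) * ((s ^ 2) ^ (n + 1) * s) := by
    intro i x
    rw [bump_rd, abs_mul]
    have := bump_coord (x0 := x0) hs n i x
    have e : |-2 * ((n : ℝ) + 2)| = 2 * ((n : ℝ) + 2) := by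
      rw [abs_mul, abs_of_nonneg (by positivity : (0:ℝ) ≤ (n : ℝ) + 2)]; norm_num
    rw [e]
    have h0 : 0 ≤ (s ^ 2) ^ (n + 2) := by positivity
    have := mul_le_mul_of_nonneg_left this (by positivity : (0:ℝ) ≤ 2 * ((n : ℝ) + 2))
    linarith
  refine ⟨(s ^ 2) ^ (n + 2) + 2 * ((n : ℝ) + 2) * ((s ^ 2) ^ (n + 1) * s), ⟨?_, ?_, hr 0, hr 1⟩⟩
  · exact fun x => (bump_hasFDeriv x0 s n x).differentiableAt
  · intro x
    rw [abs_of_nonneg (pow_nonneg (bump_nonneg _ _ _) _)]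
    have h1 := pow_le_pow_left₀ (bump_nonneg x0 s x) (bump_le x0 s x) (n + 2)
    have : 0 ≤ 2 * ((n : ℝ) + 2) * ((s ^ 2) ^ (n + 1) * s) := by positivity
    linarith

lemma hasFDerivAt_dens {Ψ : Pt → ℂ} {x : Pt} (h : DifferentiableAt ℝ Ψ x) :
    DifferentiableAt ℝ (fun x => ‖Ψ x‖ ^ 2) x ∧ ∀ v, fderiv ℝ (fun x => ‖Ψ x‖ ^ 2) x v =
      2 * (starRingEnd ℂ (Ψ x) * fderiv ℝ Ψ x v).re := by
  have := h.hasFDerivAt.norm_sq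
  refine ⟨this.differentiableAt, fun v => ?_⟩
  have e := congrArg (fun L : Pt →L[ℝ] ℝ => L v) this.fderiv
  refine Eq.trans e ?_
  simp [Complex.inner]
  ring

/-- weighted moments of a density -/
def mom (U : Pt → ℝ) (x0 : Pt) (k : ℕ) (s : ℝ) : ℝ := ∫ x in B1, bump x0 s x ^ k * U x

lemma mom_int {U : Pt → ℝ} (hU : IntegrableOn U B1) (x0 : Pt) (k : ℕ) (s : ℝ) :
    IntegrableOn (fun x => bump x0 s x ^ k * U x) B1 := by
  refine int_mul_bdd (M := (s ^ 2) ^ k) hU ((bump_cont x0 s).pow k).measurable fun x => ?_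
  rw [abs_of_nonneg (pow_nonneg (bump_nonneg _ _ _) _)]
  exact pow_le_pow_left₀ (bump_nonneg x0 s x) (bump_le x0 s x) k

lemma ibp_i {U D : Pt → ℝ} (hU : IntegrableOn U B1) (hD : IntegrableOn D B1) (i : Fin 2)
    (hdU : ∀ x ∈ B1, DifferentiableAt ℝ U x ∧ fderiv ℝ U x (EuclideanSpace.single i 1) = D x)
    {x0 : Pt} {s : ℝ} (hs : 0 < s) (hsub : Metric.closedBall x0 s ⊆ B1) (n : ℕ) :
    IntegrableOn (fun x => rd i (rd i (fun x => bump x0 s x ^ (n + 3))) x * U x) B1 ∧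
    IntegrableOn (fun x => rd i (fun x => bump x0 s x ^ (n + 3)) x * D x) B1 ∧
    ∫ x in B1, rd i (fun x => bump x0 s x ^ (n + 3)) x * D x =
      - ∫ x in B1, rd i (rd i (fun x => bump x0 s x ^ (n + 3))) x * U x := by
  set g := rd i (fun x => bump x0 s x ^ (n + 3)) with hg
  have hge : ∀ x, g x = -2 * ((n : ℝ) + 3) * (bump x0 s x ^ (n + 2) * (x i - x0 i)) := by
    intro x
    have := bump_rd x0 s (n + 1) i x
    push_cast at this
    rw [hg, this]; ring
  have hg2 : ∀ x, rd i g x = -2 * ((n : ℝ) + 3) * (bump x0 s x ^ (n + 2) -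
        2 * ((n : ℝ) + 2) * (bump x0 s x ^ (n + 1) * (x i - x0 i) ^ 2)) :=
    fun x => (bump_rd2_has x0 s n i x).2
  have hgd : Differentiable ℝ g := fun x => (bump_rd2_has x0 s n i x).1
  have z1 : ∀ x, x ∉ Metric.closedBall x0 s → g x = 0 := by
    intro x hx
    have : s ≤ ‖x - x0‖ := by
      rw [Metric.mem_closedBall, dist_eq_norm] at hx; linarith
    rw [hge, bump_zero hs.le this]; simp
  have z2 : ∀ x, x ∉ Metric.closedBall x0 s → rd i g x = 0 := by
    intro x hx
    have : s ≤ ‖x - x0‖ := by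
      rw [Metric.mem_closedBall, dist_eq_norm] at hx; linarith
    rw [hg2, bump_zero hs.le this]; simp
  have gb : ∀ x, |g x| ≤ 2 * ((n : ℝ) + 3) * ((s ^ 2) ^ (n + 2) * s) := by
    intro x
    rw [hge, abs_mul]
    have e : |-2 * ((n : ℝ) + 3)| = 2 * ((n : ℝ) + 3) := by
      rw [abs_mul, abs_of_nonneg (by positivity : (0:ℝ) ≤ (n : ℝ) + 3)]; norm_num
    rw [e]
    exact mul_le_mul_of_nonneg_left (bump_coord hs.le (n + 1) i x) (by positivity)
  have gc : Continuous (rd i g) := by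
    have : rd i g = fun x => -2 * ((n : ℝ) + 3) * (bump x0 s x ^ (n + 2) -
        2 * ((n : ℝ) + 2) * (bump x0 s x ^ (n + 1) * (x i - x0 i) ^ 2)) := funext hg2
    rw [this]
    have := bump_cont x0 s
    fun_prop
  obtain ⟨M, hM⟩ : ∃ M, ∀ x, |rd i g x| ≤ M := by
    obtain ⟨M, hM⟩ := (isCompact_closedBall x0 s).exists_bound_of_continuousOn gc.continuousOn
    refine ⟨max M 0, fun x => ?_⟩
    by_cases hx : x ∈ Metric.closedBall x0 s
    · exact (hM x hx).trans (le_max_left _ _)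
    · rw [z2 x hx]; simp
  have I1 : IntegrableOn (fun x => rd i g x * U x) B1 := int_mul_bdd hU gc.measurable hM
  have I2 : IntegrableOn (fun x => g x * D x) B1 := int_mul_bdd hD hgd.continuous.measurable gb
  have I3 : IntegrableOn (fun x => g x * U x) B1 := int_mul_bdd hU hgd.continuous.measurable gb
  have nB : ∀ x, x ∉ B1 → x ∉ Metric.closedBall x0 s := fun x hx h => hx (hsub h)
  refine ⟨I1, I2, ?_⟩
  have tsup : tsupport g ⊆ B1 := by
    refine Set.Subset.trans ?_ hsub
    refine closure_minimal (fun x hx => ?_) Metric.isClosed_closedBall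
    by_contra h
    exact hx (z1 x h)
  have key := integral_mul_fderiv_eq_neg_fderiv_mul_of_integrable (𝕜 := ℝ) (μ := (volume : Measure Pt)) (f := U) (g := g)
    (v := EuclideanSpace.single i 1) ?_ ?_ ?_ (fun x hx => (hdU x (tsup hx)).1) (fun x _ => hgd x)
  · have f1 : ∫ x in B1, U x * fderiv ℝ g x (EuclideanSpace.single i 1) =
        ∫ x, U x * fderiv ℝ g x (EuclideanSpace.single i 1) :=
      setIntegral_eq_integral_of_forall_compl_eq_zero (fun x hx => by
        have := z2 x (nB x hx)
        rw [rd] at this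
        rw [this]; simp)
    have f2 : ∫ x in B1, fderiv ℝ U x (EuclideanSpace.single i 1) * g x =
        ∫ x, fderiv ℝ U x (EuclideanSpace.single i 1) * g x :=
      setIntegral_eq_integral_of_forall_compl_eq_zero (fun x hx => by
        rw [z1 x (nB x hx)]; simp)
    have e1 : ∫ x in B1, g x * D x = ∫ x in B1, fderiv ℝ U x (EuclideanSpace.single i 1) * g x := by
      refine setIntegral_congr_fun B1_meas fun x hx => ?_
      simp only [(hdU x hx).2]; ring
    have e2 : ∫ x in B1, rd i g x * U x = ∫ x in B1, U x * fderiv ℝ g x (EuclideanSpace.single i 1) := by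
      refine setIntegral_congr_fun B1_meas fun x hx => ?_
      simp only [rd]; ring
    rw [e1, e2, f1, f2]; linarith [key]
  · have : IntegrableOn (fun x => fderiv ℝ U x (EuclideanSpace.single i 1) * g x) B1 := by
      refine I2.congr_fun (fun x hx => ?_) B1_meas
      simp only [(hdU x hx).2]; ring
    refine this.integrable_of_forall_notMem_eq_zero fun x hx => ?_
    rw [z1 x (nB x hx)]; simp
  · have : IntegrableOn (fun x => U x * fderiv ℝ g x (EuclideanSpace.single i 1)) B1 := by
      refine I1.congr_fun (fun x hx => ?_) B1_meas
      simp only [rd]; ring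
    refine this.integrable_of_forall_notMem_eq_zero fun x hx => ?_
    have := z2 x (nB x hx)
    rw [rd] at this
    rw [this]; simp
  · have : IntegrableOn (fun x => U x * g x) B1 := by
      refine I3.congr_fun (fun x hx => ?_) B1_meas
      simp only; ring
    refine this.integrable_of_forall_notMem_eq_zero fun x hx => ?_
    rw [z1 x (nB x hx)]; simp

lemma subsol {ε Ω R κ : ℝ} {Ψ : Pt → ℂ} (h : IsGPMinimizer ε Ω Ψ) (hR : R < 1)
    (hμ : (gpEnergy ε Ω Ψ + (∫ x in B1, ‖Ψ x‖ ^ 4) / ε ^ 2) + Ω ^ 2 * R ^ 2 / 4 ≤ -κ)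
    {x0 : Pt} {s : ℝ} (hs : 0 < s) (hsub : ‖x0‖ + s ≤ R) (n : ℕ) :
    2 * κ * mom (fun x => ‖Ψ x‖ ^ 2) x0 (n + 3) s ≤
      4 * ((n : ℝ) + 2) * ((n : ℝ) + 3) * s ^ 2 * mom (fun x => ‖Ψ x‖ ^ 2) x0 (n + 1) s
      - 4 * ((n : ℝ) + 3) ^ 2 * mom (fun x => ‖Ψ x‖ ^ 2) x0 (n + 2) s := by
  have nrm : ∀ x ∈ Metric.closedBall x0 s, ‖x‖ ≤ R := by
    intro x hx
    rw [Metric.mem_closedBall, dist_eq_norm] at hx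
    have := norm_add_le (x - x0) x0
    rw [sub_add_cancel] at this
    linarith
  have hsub' : Metric.closedBall x0 s ⊆ B1 := fun x hx => mem_B1.2 ((nrm x hx).trans_lt hR)
  have hadm := h.1
  have i1 := int_dU1 hadm
  have i2 := int_dU2 hadm
  obtain ⟨hd, hU, hT, hQ, hJ, h1⟩ := hadm
  have hdx : ∀ x ∈ B1, DifferentiableAt ℝ Ψ x := fun x hx => hd.differentiableAt (B1_open.mem_nhds hx)
  have hS : IntegrableOn (kinS Ω Ψ) B1 := hT.sub (hJ.const_mul _)
  obtain ⟨J1, K1, E1⟩ := ibp_i hU i1 0 (fun x hx => ⟨(hasFDerivAt_dens (hdx x hx)).1,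
    (hasFDerivAt_dens (hdx x hx)).2 _⟩) hs hsub' n
  obtain ⟨J2, K2, E2⟩ := ibp_i hU i2 1 (fun x hx => ⟨(hasFDerivAt_dens (hdx x hx)).1,
    (hasFDerivAt_dens (hdx x hx)).2 _⟩) hs hsub' n
  obtain ⟨M, good⟩ := bump_good x0 hs.le (n + 1)
  have fv := first_variation h good
  rw [show n + 1 + 2 = n + 3 by ring] at good fv
  have m1 := mom_int hU x0 (n + 1) s
  have m2 := mom_int hU x0 (n + 2) s
  have m3 := mom_int hU x0 (n + 3) s
  have IS : IntegrableOn (fun x => bump x0 s x ^ (n + 3) * kinS Ω Ψ x) B1 :=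
    int_mul_bdd hS good.diff.continuous.measurable good.b
  have lap : (∫ x in B1, rd 0 (rd 0 (fun x => bump x0 s x ^ (n + 3))) x * ‖Ψ x‖ ^ 2) +
      (∫ x in B1, rd 1 (rd 1 (fun x => bump x0 s x ^ (n + 3))) x * ‖Ψ x‖ ^ 2) =
      4 * ((n : ℝ) + 2) * ((n : ℝ) + 3) * s ^ 2 * mom (fun x => ‖Ψ x‖ ^ 2) x0 (n + 1) s
      - 4 * ((n : ℝ) + 3) ^ 2 * mom (fun x => ‖Ψ x‖ ^ 2) x0 (n + 2) s := by
    unfold mom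
    rw [← integral_add J1 J2, ← integral_const_mul, ← integral_const_mul,
      ← integral_sub (m1.const_mul _) (m2.const_mul _)]
    congr 1; ext x
    rw [(bump_rd2_has x0 s n 0 x).2, (bump_rd2_has x0 s n 1 x).2]
    have e := bump_mul x0 s x
    have e3 : ‖x - x0‖ ^ 2 = (x 0 - x0 0) ^ 2 + (x 1 - x0 1) ^ 2 := by
      rw [norm_sq_pt]; simp
    rw [e3] at e
    have e4 : bump x0 s x ^ (n + 1) * ((x 0 - x0 0) ^ 2 + (x 1 - x0 1) ^ 2) =
        bump x0 s x ^ (n + 1) * (s ^ 2 - bump x0 s x) := by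
      rw [pow_succ, mul_assoc, e, mul_assoc]
    have e5 : bump x0 s x ^ (n + 2) = bump x0 s x ^ (n + 1) * bump x0 s x := by ring
    rw [e5]
    linear_combination (4 * ((n : ℝ) + 3) * ((n : ℝ) + 2) * ‖Ψ x‖ ^ 2) * e4
  have split : (∫ x in B1, (2 * (bump x0 s x ^ (n + 3) * kinS Ω Ψ x) +
      (rd 0 (fun x => bump x0 s x ^ (n + 3)) x * dU1 Ψ x + rd 1 (fun x => bump x0 s x ^ (n + 3)) x * dU2 Ψ x)))
      = 2 * (∫ x in B1, bump x0 s x ^ (n + 3) * kinS Ω Ψ x) +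
      ((∫ x in B1, rd 0 (fun x => bump x0 s x ^ (n + 3)) x * dU1 Ψ x) +
       ∫ x in B1, rd 1 (fun x => bump x0 s x ^ (n + 3)) x * dU2 Ψ x) := by
    rw [← integral_add K1 K2, ← integral_const_mul, ← integral_add (IS.const_mul 2) (iadd K1 K2)]
  have lowS : -(Ω ^ 2 * R ^ 2 / 4) * mom (fun x => ‖Ψ x‖ ^ 2) x0 (n + 3) s ≤
      ∫ x in B1, bump x0 s x ^ (n + 3) * kinS Ω Ψ x := by
    unfold mom
    rw [← integral_const_mul]
    refine setIntegral_mono_on (m3.const_mul _) IS B1_meas fun x hx => ?_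
    by_cases hb : x ∈ Metric.closedBall x0 s
    · have hk := pw_diamagnetic Ω Ψ x
      have hxR := nrm x hb
      have h3 : Ω ^ 2 * ‖x‖ ^ 2 / 4 * ‖Ψ x‖ ^ 2 ≤ Ω ^ 2 * R ^ 2 / 4 * ‖Ψ x‖ ^ 2 := by gcongr
      have h4 : -(Ω ^ 2 * R ^ 2 / 4) * ‖Ψ x‖ ^ 2 ≤ kinS Ω Ψ x := by unfold kinS; linarith
      have := mul_le_mul_of_nonneg_left h4 (pow_nonneg (bump_nonneg x0 s x) (n + 3))
      linarith
    · have : s ≤ ‖x - x0‖ := by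
        rw [Metric.mem_closedBall, dist_eq_norm] at hb; linarith
      rw [bump_zero hs.le this]; simp
  have q_nonneg : 0 ≤ 4 * (∫ x in B1, bump x0 s x ^ (n + 3) * ‖Ψ x‖ ^ 4) / ε ^ 2 := by
    have : 0 ≤ ∫ x in B1, bump x0 s x ^ (n + 3) * ‖Ψ x‖ ^ 4 :=
      integral_nonneg fun x => mul_nonneg (pow_nonneg (bump_nonneg _ _ _) _) (by positivity)
    positivity
  have mpos : 0 ≤ mom (fun x => ‖Ψ x‖ ^ 2) x0 (n + 3) s :=
      integral_nonneg fun x => mul_nonneg (pow_nonneg (bump_nonneg _ _ _) _) (by positivity)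
  rw [split, E1, E2] at fv
  rw [← lap]
  have hm := mul_le_mul_of_nonneg_right hμ mpos
  change _ = _ * (2 * mom (fun x => ‖Ψ x‖ ^ 2) x0 (n + 3) s) at fv
  nlinarith

lemma radial (f : ℝ → ℝ) : ∫ x : Pt, f ‖x‖ = 2 * π * ∫ y in Set.Ioi (0:ℝ), y * f y := by
  rw [integral_fun_norm_addHaar]
  have : (volume : Measure Pt).real (Metric.ball 0 1) = π := by
    rw [Measure.real, EuclideanSpace.volume_ball_fin_two]
    simp [pi_pos.le]
  rw [this]
  simp
  ring

lemma bump_integral (x0 : Pt) {s : ℝ} (hs : 0 < s) (k : ℕ) :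
    ∫ x, bump x0 s x ^ (k + 1) = π / ((k : ℝ) + 2) * s ^ (2 * k + 4) := by
  have e : ∫ x, bump x0 s x ^ (k + 1) = ∫ x : Pt, (fun r : ℝ => max 0 (s ^ 2 - r ^ 2) ^ (k + 1)) ‖x‖ := by
    exact integral_sub_right_eq_self (μ := (volume : Measure Pt)) (fun x => max 0 (s ^ 2 - ‖x‖ ^ 2) ^ (k + 1)) x0
  rw [e, radial (fun r : ℝ => max 0 (s ^ 2 - r ^ 2) ^ (k + 1))]
  have e2 : ∫ y in Set.Ioi (0:ℝ), y * max 0 (s ^ 2 - y ^ 2) ^ (k + 1) =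
      ∫ y in Set.Ioc (0:ℝ) s, y * max 0 (s ^ 2 - y ^ 2) ^ (k + 1) := by
    refine setIntegral_eq_of_subset_of_forall_sdiff_eq_zero measurableSet_Ioi (fun y hy => hy.1) fun y hy => ?_
    have h1 : 0 < y := hy.1
    have h2 : s < y := by
      by_contra h
      exact hy.2 ⟨h1, not_lt.1 h⟩
    rw [max_eq_left (by nlinarith)]; simp
  rw [e2, ← intervalIntegral.integral_of_le hs.le]
  have e3 : ∫ y in (0:ℝ)..s, y * max 0 (s ^ 2 - y ^ 2) ^ (k + 1) =
      ∫ y in (0:ℝ)..s, y * (s ^ 2 - y ^ 2) ^ (k + 1) := by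
    refine intervalIntegral.integral_congr fun y hy => ?_
    rw [Set.uIcc_of_le hs.le] at hy
    rw [max_eq_right (by nlinarith [hy.1, hy.2])]
  rw [e3, intervalIntegral.integral_eq_sub_of_hasDerivAt
    (f := fun y => -(s ^ 2 - y ^ 2) ^ (k + 2) / (2 * ((k : ℝ) + 2)))]
  · simp only [sub_self]
    simp
    field_simp
    ring
  · intro y _
    have h1 : HasDerivAt (fun y : ℝ => s ^ 2 - y ^ 2) (-(2 * y)) y := by
      simpa using (hasDerivAt_pow 2 y).const_sub (s ^ 2)
    have h2 := ((h1.pow (k + 2)).neg.div_const (2 * ((k : ℝ) + 2)))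
    refine h2.congr_deriv ?_
    push_cast
    field_simp
  · apply Continuous.intervalIntegrable
    fun_prop

lemma ball_radial (q : ℕ) : ∫ x in B1, ‖x‖ ^ (2 * q) = π / ((q : ℝ) + 1) := by
  have e : ∫ x in B1, ‖x‖ ^ (2 * q) =
      ∫ x : Pt, (fun r : ℝ => (Set.Iio (1:ℝ)).indicator (fun r => r ^ (2 * q)) r) ‖x‖ := by
    rw [← integral_indicator B1_meas]
    congr 1; ext x
    beta_reduce
    by_cases h : ‖x‖ < 1
    · rw [Set.indicator_of_mem (mem_B1.2 h), Set.indicator_of_mem (Set.mem_Iio.2 h)]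
    · rw [Set.indicator_of_notMem (fun h' => h (mem_B1.1 h')), Set.indicator_of_notMem (fun h' => h (Set.mem_Iio.1 h'))]
  rw [e, radial (fun r : ℝ => (Set.Iio (1:ℝ)).indicator (fun r => r ^ (2 * q)) r)]
  have e2 : ∫ y in Set.Ioi (0:ℝ), y * (Set.Iio (1:ℝ)).indicator (fun r => r ^ (2 * q)) y =
      ∫ y in Set.Ioo (0:ℝ) 1, y ^ (2 * q + 1) := by
    rw [setIntegral_eq_of_subset_of_forall_sdiff_eq_zero (s := Set.Ioo (0:ℝ) 1) (t := Set.Ioi 0) measurableSet_Ioi (fun y hy => hy.1)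
      (f := fun y => y * (Set.Iio (1:ℝ)).indicator (fun r => r ^ (2 * q)) y)]
    · refine setIntegral_congr_fun measurableSet_Ioo fun y hy => ?_
      rw [Set.indicator_of_mem (Set.mem_Iio.2 hy.2)]; ring
    · intro y hy
      rw [Set.indicator_of_notMem (s := Set.Iio (1:ℝ)) (a := y) (fun h' => hy.2 ⟨hy.1, h'⟩)]; simp
  rw [e2, ← integral_Ioc_eq_integral_Ioo, ← intervalIntegral.integral_of_le zero_le_one, integral_pow]
  push_cast
  simp
  field_simp
  ring

lemma mom_deriv {U : Pt → ℝ} (hU : IntegrableOn U B1) (x0 : Pt) (n : ℕ) (s : ℝ) :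
    HasDerivAt (mom U x0 (n + 2)) (2 * s * ((n : ℝ) + 2) * mom U x0 (n + 1) s) s := by
  have hb : ∀ (x : Pt) (s : ℝ), HasDerivAt (fun s => bump x0 s x ^ (n + 2) * U x)
      (((n : ℝ) + 2) * bump x0 s x ^ (n + 1) * (2 * s) * U x) s := by
    intro x s
    have h1 : HasDerivAt (fun s : ℝ => s ^ 2 - ‖x - x0‖ ^ 2) (2 * s) s := by
      simpa using (hasDerivAt_pow 2 s).sub_const (‖x - x0‖ ^ 2)
    exact ((max_pow_deriv n _).comp s h1).mul_const (U x)
  have := (hasDerivAt_integral_of_dominated_loc_of_deriv_le (μ := volume.restrict B1)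
    (F := fun s x => bump x0 s x ^ (n + 2) * U x)
    (F' := fun s x => ((n : ℝ) + 2) * bump x0 s x ^ (n + 1) * (2 * s) * U x) (x₀ := s)
    (s := Metric.ball s 1)
    (bound := fun x => ((n : ℝ) + 2) * ((|s| + 1) ^ 2) ^ (n + 1) * (2 * (|s| + 1)) * |U x|)
    (Metric.ball_mem_nhds s one_pos)
    (Eventually.of_forall fun t => (mom_int hU x0 (n + 2) t).aestronglyMeasurable)
    (mom_int hU x0 (n + 2) s)
    (by
      have := ((mom_int hU x0 (n + 1) s).const_mul (((n : ℝ) + 2) * (2 * s))).aestronglyMeasurable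
      refine this.congr (Eventually.of_forall fun x => ?_)
      simp only; ring)
    (Eventually.of_forall fun x t ht => by
      have ht' : |t| ≤ |s| + 1 := by
        rw [Metric.mem_ball, Real.dist_eq] at ht
        have := abs_sub_abs_le_abs_sub t s
        linarith
      have h1 : bump x0 t x ≤ (|s| + 1) ^ 2 := by
        refine (bump_le x0 t x).trans ?_
        rw [← sq_abs]; gcongr
      have h0 := bump_nonneg x0 t x
      rw [norm_mul, norm_mul, norm_mul, norm_mul, norm_pow]
      simp only [Real.norm_eq_abs, abs_of_nonneg h0, abs_two]
      rw [abs_of_nonneg (by positivity : (0:ℝ) ≤ (n:ℝ) + 2)]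
      gcongr)
    (hU.abs.const_mul _)
    (Eventually.of_forall fun x t _ => hb x t)).2
  have e : (∫ x in B1, ((n : ℝ) + 2) * bump x0 s x ^ (n + 1) * (2 * s) * U x) =
      2 * s * ((n : ℝ) + 2) * mom U x0 (n + 1) s := by
    unfold mom
    rw [← integral_const_mul]
    congr 1; ext x; ring
  rw [← e]; exact this

lemma mono_lim {F F' : ℝ → ℝ} {S L : ℝ} (hS : 0 < S)
    (hF : ∀ s, 0 < s → s ≤ S → HasDerivAt F (F' s) s ∧ 0 ≤ F' s)
    (hL : ∀ δ > 0, ∃ t0 > 0, ∀ t, 0 < t → t < t0 → L - δ ≤ F t) : L ≤ F S := by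
  have mono : MonotoneOn F (Set.Ioc 0 S) := by
    refine monotoneOn_of_deriv_nonneg (convex_Ioc 0 S) (fun s hs => (hF s hs.1 hs.2).1.continuousAt.continuousWithinAt)
      (fun s hs => ?_) (fun s hs => ?_)
    · rw [interior_Ioc] at hs
      exact (hF s hs.1 hs.2.le).1.differentiableAt.differentiableWithinAt
    · rw [interior_Ioc] at hs
      rw [(hF s hs.1 hs.2.le).1.deriv]; exact (hF s hs.1 hs.2.le).2
  refine le_of_forall_pos_le_add fun δ hδ => ?_
  obtain ⟨t0, h0, ht⟩ := hL δ hδ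
  have hp : 0 < min (t0 / 2) S := lt_min (by linarith) hS
  have a := ht (min (t0 / 2) S) hp (lt_of_le_of_lt (min_le_left _ _) (by linarith))
  have b := mono ⟨hp, min_le_right _ _⟩ ⟨hS, le_rfl⟩ (min_le_right (t0 / 2) S)
  linarith

lemma bump_int (x0 : Pt) {s : ℝ} (hs : 0 < s) (k : ℕ) : Integrable (fun x => bump x0 s x ^ (k + 1)) := by
  refine ((bump_cont x0 s).pow (k + 1)).integrable_of_hasCompactSupport ?_
  refine HasCompactSupport.intro (isCompact_closedBall x0 s) fun x hx => ?_
  have : s ≤ ‖x - x0‖ := by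
    rw [Metric.mem_closedBall, dist_eq_norm] at hx; linarith
  rw [Pi.pow_apply, bump_zero hs.le this]; simp

lemma mom_lower {U : Pt → ℝ} (hU : IntegrableOn U B1) {x0 : Pt} {s : ℝ} (hs : 0 < s)
    (hsub : Metric.closedBall x0 s ⊆ B1) (k : ℕ) {c : ℝ} (hc : ∀ x ∈ Metric.closedBall x0 s, c ≤ U x) :
    c * (π / ((k : ℝ) + 2) * s ^ (2 * k + 4)) ≤ mom U x0 (k + 1) s := by
  have e := bump_integral x0 hs k
  have e2 : π / ((k : ℝ) + 2) * s ^ (2 * k + 4) = ∫ x in B1, bump x0 s x ^ (k + 1) := by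
    rw [setIntegral_eq_integral_of_forall_compl_eq_zero, e]
    · intro x hx
      have hx' : x ∉ Metric.closedBall x0 s := fun h => hx (hsub h)
      have : s ≤ ‖x - x0‖ := by
        rw [Metric.mem_closedBall, dist_eq_norm] at hx'; linarith
      rw [bump_zero hs.le this]; simp
  rw [e2, mom, ← integral_const_mul]
  refine setIntegral_mono_on ((bump_int x0 hs k).integrableOn.const_mul c) (mom_int hU _ _ _) B1_meas fun x hx => ?_
  by_cases hb : x ∈ Metric.closedBall x0 s
  · nlinarith [hc x hb, pow_nonneg (bump_nonneg x0 s x) (k + 1)]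
  · have : s ≤ ‖x - x0‖ := by
      rw [Metric.mem_closedBall, dist_eq_norm] at hb; linarith
    rw [bump_zero hs.le this]; simp

lemma mom_upper {U : Pt → ℝ} (hU : IntegrableOn U B1) {x0 : Pt} {s : ℝ} (hs : 0 < s)
    (hsub : Metric.closedBall x0 s ⊆ B1) (k : ℕ) {c : ℝ} (hc : ∀ x ∈ Metric.closedBall x0 s, U x ≤ c) :
    mom U x0 (k + 1) s ≤ c * (π / ((k : ℝ) + 2) * s ^ (2 * k + 4)) := by
  have h := mom_lower (U := fun x => - U x) hU.neg hs hsub k (c := -c) (fun x hx => neg_le_neg (hc x hx))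
  have e : mom (fun x => - U x) x0 (k + 1) s = - mom U x0 (k + 1) s := by
    unfold mom; rw [← integral_neg]; simp
  rw [e] at h; linarith

lemma lim_lower {U : Pt → ℝ} (hU : IntegrableOn U B1) {x0 : Pt} (h0 : x0 ∈ B1)
    (hc : ContinuousAt U x0) (k : ℕ) :
    ∀ δ > 0, ∃ t0 > 0, ∀ t, 0 < t → t < t0 →
      π / ((k : ℝ) + 2) * U x0 - δ ≤ mom U x0 (k + 1) t / t ^ (2 * k + 4) := by
  intro δ hδ
  have hp : 0 < π / ((k : ℝ) + 2) := by positivity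
  obtain ⟨r1, h1, hr1⟩ := Metric.isOpen_iff.1 B1_open x0 h0
  obtain ⟨r2, h2, hr2⟩ := Metric.continuousAt_iff.1 hc (δ / (π / ((k : ℝ) + 2))) (by positivity)
  refine ⟨min r1 r2, lt_min h1 h2, fun t ht htr => ?_⟩
  have sub1 : Metric.closedBall x0 t ⊆ B1 := fun x hx =>
    hr1 (lt_of_le_of_lt hx (htr.trans_le (min_le_left _ _)))
  have := mom_lower hU ht sub1 k (c := U x0 - δ / (π / ((k : ℝ) + 2))) (fun x hx => by
    have := hr2 (lt_of_le_of_lt hx (htr.trans_le (min_le_right _ _)))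
    rw [Real.dist_eq] at this
    have := (abs_lt.1 this).1
    linarith)
  rw [le_div_iff₀ (by positivity)]
  refine le_trans (le_of_eq ?_) this
  field_simp

lemma mean_growth {U : Pt → ℝ} (hU : IntegrableOn U B1) {x0 : Pt} (h0 : x0 ∈ B1)
    (hc : ContinuousAt U x0) (hpos : ∀ x, 0 ≤ U x) {κ S : ℝ} (hκ : 0 ≤ κ) (hS : 0 < S)
    (hsub : ∀ s, 0 < s → s ≤ S → ∀ n : ℕ, 2 * κ * mom U x0 (n + 3) s ≤
      4 * ((n : ℝ) + 2) * ((n : ℝ) + 3) * s ^ 2 * mom U x0 (n + 1) s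
      - 4 * ((n : ℝ) + 3) ^ 2 * mom U x0 (n + 2) s) :
    π / 3 * U x0 * (1 + κ * S ^ 2 / 8) ≤ mom U x0 2 S / S ^ 6 := by
  have mp : ∀ k s, 0 ≤ mom U x0 k s := fun k s =>
    integral_nonneg fun x => mul_nonneg (pow_nonneg (bump_nonneg _ _ _) _) (hpos x)
  have d : ∀ (n : ℕ) s, 0 < s → s ≤ S → ∃ D, HasDerivAt (fun s => mom U x0 (n + 2) s / s ^ (2 * n + 6)) D s ∧
      κ * mom U x0 (n + 3) s / (((n : ℝ) + 3) * s ^ (2 * n + 7)) ≤ D := by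
    intro n s hs hsS
    refine ⟨_, (mom_deriv hU x0 n s).div (hasDerivAt_pow (2 * n + 6) s) (by positivity), ?_⟩
    have h := hsub s hs hsS n
    rw [div_le_div_iff₀ (by positivity) (by positivity)]
    have e : (2 * n + 6 - 1 : ℕ) = 2 * n + 5 := by omega
    rw [e]
    push_cast
    have hp : 0 < s ^ (4 * n + 12) / 2 := by positivity
    have := mul_le_mul_of_nonneg_right h hp.le
    calc _ = (2 * κ * mom U x0 (n + 3) s) * (s ^ (4 * n + 12) / 2) := by ring
      _ ≤ _ := this
      _ = _ := by ring
  have A : ∀ s, 0 < s → s ≤ S → π / 4 * U x0 ≤ mom U x0 3 s / s ^ 8 := by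
    intro s hs hsS
    choose! D hD1 hD2 using d 1
    have := mono_lim (F := fun s => mom U x0 (1 + 2) s / s ^ (2 * 1 + 6)) (F' := D) (L := π / 4 * U x0) hs
      (fun t ht htS => ⟨hD1 t ht (htS.trans hsS), le_trans (by have := mp (1 + 3) t; positivity) (hD2 t ht (htS.trans hsS))⟩) (by
        have := lim_lower hU h0 hc 2
        norm_num at this ⊢
        exact this)
    simpa using this
  choose! D hD1 hD2 using d 0
  have := mono_lim (F := fun s => mom U x0 2 s / s ^ 6 - (π / 3 * U x0 * κ / 8) * s ^ 2)
      (F' := fun s => D s - (π / 3 * U x0 * κ / 8) * (2 * s)) (L := π / 3 * U x0) hS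
      (fun t ht htS => ⟨?_, ?_⟩) ?_
  · linarith [this]
  · have h1 := hD1 t ht htS
    simp only [mul_zero, zero_add] at h1
    refine h1.sub ?_
    simpa using (hasDerivAt_pow 2 t).const_mul (π / 3 * U x0 * κ / 8)
  · have h1 := hD2 t ht htS
    have h2 := A t ht htS
    norm_num at h1
    have h3 : κ * mom U x0 3 t / (3 * t ^ 7) = κ * t / 3 * (mom U x0 3 t / t ^ 8) := by
      field_simp
    rw [h3] at h1
    have h4 := mul_le_mul_of_nonneg_left h2 (by positivity : 0 ≤ κ * t / 3)
    nlinarith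
  · intro δ hδ
    obtain ⟨t1, ht1, H⟩ := lim_lower hU h0 hc 1 (δ / 2) (by linarith)
    have hA : 0 ≤ π / 3 * U x0 * κ / 8 := by have := hpos x0; positivity
    set a := π / 3 * U x0 * κ / 8 with ha
    refine ⟨min t1 (min 1 (δ / (2 * (a + 1)))), by positivity, fun t ht htt => ?_⟩
    have g1 := H t ht (htt.trans_le (min_le_left _ _))
    have g2 : t < 1 := htt.trans_le ((min_le_right _ _).trans (min_le_left _ _))
    have g3 : t < δ / (2 * (a + 1)) := htt.trans_le ((min_le_right _ _).trans (min_le_right _ _))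
    rw [lt_div_iff₀ (by positivity)] at g3
    norm_num at g1
    have g4 : t ^ 2 ≤ t := by nlinarith
    have : a * t ^ 2 ≤ a * t := mul_le_mul_of_nonneg_left g4 hA
    nlinarith

lemma decay {ε Ω R K : ℝ} {Ψ : Pt → ℂ} (h : IsGPMinimizer ε Ω Ψ) (hR : R < 1) (hK : 0 < K)
    (hμ : (gpEnergy ε Ω Ψ + (∫ x in B1, ‖Ψ x‖ ^ 4) / ε ^ 2) + Ω ^ 2 * R ^ 2 / 4 ≤ -K ^ 2) (N : ℕ) :
    ∀ x : Pt, ‖x‖ + ((N : ℝ) + 1) * (3 / K) ≤ R → ‖Ψ x‖ ^ 2 ≤ K ^ 2 / 9 / 2 ^ N := by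
  have hs : 0 < 3 / K := by positivity
  obtain ⟨hd, hU, -, -, -, h1⟩ := h.1
  have hsK : K ^ 2 * (3 / K) ^ 2 = 9 := by field_simp; norm_num
  have nrm : ∀ x0 : Pt, ∀ x ∈ Metric.closedBall x0 (3 / K), ‖x‖ ≤ ‖x0‖ + 3 / K := by
    intro x0 x hx
    rw [Metric.mem_closedBall, dist_eq_norm] at hx
    have := norm_add_le (x - x0) x0
    rw [sub_add_cancel] at this
    linarith
  have sub : ∀ x0 : Pt, ‖x0‖ + 3 / K ≤ R → Metric.closedBall x0 (3 / K) ⊆ B1 := fun x0 h0 x hx =>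
    mem_B1.2 (by linarith [nrm x0 x hx])
  have mg : ∀ x : Pt, ‖x‖ + 3 / K ≤ R →
      2 * (π / 3 * ‖Ψ x‖ ^ 2) ≤ mom (fun x => ‖Ψ x‖ ^ 2) x 2 (3 / K) / (3 / K) ^ 6 := by
    intro x hx
    have hB : x ∈ B1 := mem_B1.2 (by linarith)
    have := mean_growth hU hB
      (hasFDerivAt_dens (hd.differentiableAt (B1_open.mem_nhds hB))).1.continuousAt
      (fun _ => by positivity) (κ := K ^ 2) (by positivity) hs
      (fun s h0 hsS n => subsol h hR hμ h0 (by linarith) n)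
    rw [hsK] at this
    refine le_trans ?_ this
    have : 0 ≤ π / 3 * ‖Ψ x‖ ^ 2 := by positivity
    linarith
  induction N with
  | zero =>
    intro x hx
    simp only [Nat.cast_zero, zero_add, one_mul] at hx
    have h2 := mg x hx
    have h3 : mom (fun x => ‖Ψ x‖ ^ 2) x 2 (3 / K) ≤ (3 / K) ^ 4 := by
      have : mom (fun x => ‖Ψ x‖ ^ 2) x 2 (3 / K) ≤ ∫ y in B1, (3 / K) ^ 4 * ‖Ψ y‖ ^ 2 := by
        refine integral_mono (mom_int hU _ _ _) (hU.const_mul _) fun y => ?_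
        have a := pow_le_pow_left₀ (bump_nonneg x (3 / K) y) (bump_le x (3 / K) y) 2
        rw [← pow_mul] at a
        exact mul_le_mul_of_nonneg_right a (by positivity)
      rw [integral_const_mul, h1, mul_one] at this
      exact this
    have h4 : mom (fun x => ‖Ψ x‖ ^ 2) x 2 (3 / K) / (3 / K) ^ 6 ≤ K ^ 2 / 9 := by
      rw [div_le_iff₀ (by positivity)]
      refine h3.trans (le_of_eq ?_)
      field_simp; norm_num
    have := pi_gt_three
    simp only [pow_zero, div_one]
    nlinarith [sq_nonneg ‖Ψ x‖]
  | succ N ih =>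
    intro x hx
    push_cast at hx
    have hx1 : ‖x‖ + 3 / K ≤ R := by
      have : 0 ≤ ((N : ℝ) + 1) * (3 / K) := by positivity
      linarith
    have h2 := mg x hx1
    have h3 := mom_upper hU hs (sub x hx1) 1 (c := K ^ 2 / 9 / 2 ^ N) (fun y hy => ih y (by
      have := nrm x y hy
      linarith))
    norm_num at h3
    have h4 : mom (fun x => ‖Ψ x‖ ^ 2) x 2 (3 / K) / (3 / K) ^ 6 ≤ K ^ 2 / 9 / 2 ^ N * (π / 3) := by
      rw [div_le_iff₀ (by positivity)]
      linarith
    have h5 := h2.trans h4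
    have hp : 0 < π / 3 := by positivity
    have h6 : 2 * ‖Ψ x‖ ^ 2 ≤ K ^ 2 / 9 / 2 ^ N := by
      refine le_of_mul_le_mul_right ?_ hp
      linarith
    rw [pow_succ (2:ℝ) N, ← div_div]
    linarith

/-- complex coordinate -/
def zc : Pt →L[ℝ] ℂ := (EuclideanSpace.proj (𝕜 := ℝ) (0 : Fin 2) : Pt →L[ℝ] ℝ).smulRight (1:ℂ) +
  (EuclideanSpace.proj (𝕜 := ℝ) (1 : Fin 2) : Pt →L[ℝ] ℝ).smulRight Complex.I

/-- conjugate complex coordinate -/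
def zb : Pt →L[ℝ] ℂ := (EuclideanSpace.proj (𝕜 := ℝ) (0 : Fin 2) : Pt →L[ℝ] ℝ).smulRight (1:ℂ) -
  (EuclideanSpace.proj (𝕜 := ℝ) (1 : Fin 2) : Pt →L[ℝ] ℝ).smulRight Complex.I

lemma zc_apply (x : Pt) : zc x = (x 0 : ℂ) + (x 1 : ℂ) * Complex.I := by simp [zc]
lemma zb_apply (x : Pt) : zb x = (x 0 : ℂ) - (x 1 : ℂ) * Complex.I := by simp [zb]

lemma zc_norm (x : Pt) : ‖zc x‖ = ‖x‖ := by
  rw [← sq_eq_sq₀ (norm_nonneg _) (norm_nonneg _), norm_sq_pt, zc_apply, ← Complex.normSq_eq_norm_sq,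
    Complex.normSq_apply]
  simp; ring

lemma zb_norm (x : Pt) : ‖zb x‖ = ‖x‖ := by
  rw [← sq_eq_sq₀ (norm_nonneg _) (norm_nonneg _), norm_sq_pt, zb_apply, ← Complex.normSq_eq_norm_sq,
    Complex.normSq_apply]
  simp; ring

/-- trial function -/
def tri (c : ℝ) (a b : ℤ) (x : Pt) : ℂ := (c : ℂ) * (zc x ^ a * zb x ^ b)

lemma tri_norm {c : ℝ} (hc : 0 < c) {a b : ℤ} {p : ℕ} (hp : 2 ≤ p) (ha : a ≠ 0) (hab : a + b = p) (x : Pt) :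
    ‖tri c a b x‖ = c * ‖x‖ ^ p := by
  rw [tri, norm_mul, norm_mul, norm_zpow, norm_zpow, zc_norm, zb_norm, Complex.norm_real,
    Real.norm_eq_abs, abs_of_pos hc]
  rcases eq_or_ne x 0 with rfl | hx
  · simp [zero_zpow a ha]; right; omega
  · rw [← zpow_add₀ (norm_ne_zero_iff.2 hx), hab, zpow_natCast]

lemma tri_deriv (c : ℝ) (a b : ℤ) {x : Pt} (hx : x ≠ 0) :
    ∃ L : Pt →L[ℝ] ℂ, HasFDerivAt (tri c a b) L x ∧
      ∀ v, L v = tri c a b x * (a * zc v / zc x + b * zb v / zb x) := by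
  have h1 : zc x ≠ 0 := by rw [← norm_ne_zero_iff, zc_norm]; exact norm_ne_zero_iff.2 hx
  have h2 : zb x ≠ 0 := by rw [← norm_ne_zero_iff, zb_norm]; exact norm_ne_zero_iff.2 hx
  have d1 := ((hasDerivAt_zpow a (zc x) (Or.inl h1)).hasFDerivAt.restrictScalars ℝ).comp x zc.hasFDerivAt
  have d2 := ((hasDerivAt_zpow b (zb x) (Or.inl h2)).hasFDerivAt.restrictScalars ℝ).comp x zb.hasFDerivAt
  refine ⟨_, (d1.mul d2).const_mul (c : ℂ), fun v => ?_⟩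
  simp only [_root_.smul_apply, _root_.add_apply, tri]
  simp [zpow_sub_one₀ h1, zpow_sub_one₀ h2]
  field_simp
  ring

lemma tri_deriv0 {c : ℝ} (hc : 0 < c) {a b : ℤ} {p : ℕ} (hp : 2 ≤ p) (ha : a ≠ 0) (hab : a + b = p) :
    HasFDerivAt (tri c a b) (0 : Pt →L[ℝ] ℂ) 0 := by
  have h0 : tri c a b 0 = 0 := by
    rw [← norm_eq_zero, tri_norm hc hp ha hab]; simp; right; omega
  rw [hasFDerivAt_iff_isLittleO_nhds_zero]
  simp only [zero_add, h0, sub_zero, _root_.zero_apply]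
  refine Asymptotics.IsBigO.trans_isLittleO (g := fun x : Pt => ‖x‖ ^ p) ?_ ?_
  · refine Asymptotics.IsBigO.of_bound c (Eventually.of_forall fun u => ?_)
    rw [tri_norm hc hp ha hab]; simp
  · exact Asymptotics.isLittleO_norm_pow_id (by omega)

lemma alg_T (z u v : ℂ) (ha : u ≠ 0) (hb : ‖v‖ = ‖u‖) (a b : ℝ) :
   ‖z * (a * 1 / u + b * 1 / v)‖ ^ 2 + ‖z * (a * Complex.I / u + b * (-Complex.I) / v)‖ ^ 2 =
    ‖z‖ ^ 2 * ((a + b) ^ 2 + (a - b) ^ 2) / ‖u‖ ^ 2 := by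
  have e1 : z * (a * Complex.I / u + b * (-Complex.I) / v) = Complex.I * (z * (a / u - b / v)) := by ring
  rw [e1, norm_mul Complex.I, Complex.norm_I, one_mul, mul_one, mul_one, norm_mul, norm_mul, mul_pow, mul_pow,
    ← mul_add]
  have := parallelogram_law_with_norm ℝ ((a:ℂ) / u) ((b:ℂ) / v)
  rw [norm_div, norm_div, hb, Complex.norm_real, Complex.norm_real, Real.norm_eq_abs, Real.norm_eq_abs] at this
  have hu : ‖u‖ ≠ 0 := norm_ne_zero_iff.2 ha
  rw [show ‖(a:ℂ) / u + b / v‖ ^ 2 + ‖(a:ℂ) / u - b / v‖ ^ 2 = 2 * ((|a| / ‖u‖) ^ 2 + (|b| / ‖u‖) ^ 2) by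
    nlinarith [this], div_pow, div_pow, sq_abs, sq_abs]
  field_simp
  ring

lemma trial (ε Ω : ℝ) {p : ℕ} (hp : 2 ≤ p) (k : ℕ) :
    gpGround ε Ω ≤ ((p : ℝ) + 1) / p * ((p : ℝ) ^ 2 + ((p : ℝ) + 2 * k) ^ 2) - Ω * ((p : ℝ) + 2 * k)
      + ((p : ℝ) + 1) ^ 2 / (π * (2 * p + 1)) / ε ^ 2 := by
  obtain ⟨q, rfl⟩ : ∃ q, p = q + 1 := ⟨p - 1, by omega⟩
  set c : ℝ := √(((q + 1 : ℕ) + 1 : ℝ) / π) with hcdef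
  have hc : 0 < c := by positivity
  have hc2 : c ^ 2 = ((q + 1 : ℕ) + 1 : ℝ) / π := Real.sq_sqrt (by positivity)
  set a : ℤ := (q + 1 : ℕ) + k with hadef
  set b : ℤ := -k with hbdef
  have ha : a ≠ 0 := by omega
  have hab : a + b = (q + 1 : ℕ) := by omega
  have habR : (a : ℝ) + b = (q + 1 : ℕ) := by exact_mod_cast hab
  have hmR : (a : ℝ) - b = (q + 1 : ℕ) + 2 * k := by
    have : a - b = (q + 1 : ℕ) + 2 * k := by omega
    exact_mod_cast this
  set Ψ := tri c a b with hΨ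
  have nrm := fun x => tri_norm hc hp ha hab x
  have d0 := tri_deriv0 hc hp ha hab
  have U2 : ∀ x, ‖Ψ x‖ ^ 2 = c ^ 2 * ‖x‖ ^ (2 * (q + 1)) := fun x => by rw [nrm]; ring
  have U4 : ∀ x, ‖Ψ x‖ ^ 4 = c ^ 4 * ‖x‖ ^ (2 * (2 * (q + 1))) := fun x => by rw [nrm]; ring
  have z0 : zc (EuclideanSpace.single 0 1) = 1 := by simp [zc_apply]
  have z1 : zc (EuclideanSpace.single 1 1) = Complex.I := by simp [zc_apply]
  have b0 : zb (EuclideanSpace.single 0 1) = 1 := by simp [zb_apply]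
  have b1 : zb (EuclideanSpace.single 1 1) = -Complex.I := by simp [zb_apply]
  have T : ∀ x, ‖pd1 Ψ x‖ ^ 2 + ‖pd2 Ψ x‖ ^ 2 =
      c ^ 2 * (((q + 1 : ℕ) : ℝ) ^ 2 + (((q + 1 : ℕ) : ℝ) + 2 * k) ^ 2) * ‖x‖ ^ (2 * q) := by
    intro x
    rcases eq_or_ne x 0 with rfl | hx
    · rw [pd1, pd2, d0.fderiv]
      have : q ≠ 0 := by omega
      simp [this]
    · obtain ⟨L, hL, hv⟩ := tri_deriv c a b hx
      rw [pd1, pd2, hL.fderiv, hv, hv, z0, z1, b0, b1]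
      have h1 : zc x ≠ 0 := by rw [← norm_ne_zero_iff, zc_norm]; exact norm_ne_zero_iff.2 hx
      have := alg_T (Ψ x) (zc x) (zb x) h1 (by rw [zc_norm, zb_norm]) a b
      push_cast at this
      rw [this, U2, habR, hmR, zc_norm]
      have : ‖x‖ ≠ 0 := norm_ne_zero_iff.2 hx
      field_simp
      ring
  have J : ∀ x, (starRingEnd ℂ (Ψ x) * angMom Ψ x).re =
      (((q + 1 : ℕ) : ℝ) + 2 * k) * c ^ 2 * ‖x‖ ^ (2 * (q + 1)) := by
    intro x
    rcases eq_or_ne x 0 with rfl | hx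
    · have : Ψ 0 = 0 := by rw [← norm_eq_zero, nrm]; simp
      rw [this]; simp
    · obtain ⟨L, hL, hv⟩ := tri_deriv c a b hx
      have h1 : zc x ≠ 0 := by rw [← norm_ne_zero_iff, zc_norm]; exact norm_ne_zero_iff.2 hx
      have h2 : zb x ≠ 0 := by rw [← norm_ne_zero_iff, zb_norm]; exact norm_ne_zero_iff.2 hx
      have e : angMom Ψ x = (((a : ℝ) - b : ℝ) : ℂ) * Ψ x := by
        rw [angMom, pd1, pd2, hL.fderiv, hv, hv, z0, z1, b0, b1]
        have e1 := zc_apply x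
        have e2 := zb_apply x
        have : (x 0 : ℂ) = (zc x + zb x) / 2 := by rw [e1, e2]; ring
        have i2 := Complex.I_sq
        have : (x 1 : ℂ) = -Complex.I * (zc x - zb x) / 2 := by
          rw [e1, e2]; linear_combination (x 1 : ℂ) * i2
        rw [‹(x 0 : ℂ) = _›, this]
        push_cast
        field_simp
        ring_nf
        rw [i2]
        ring
      rw [e, mul_left_comm, ← Complex.normSq_eq_conj_mul_self, Complex.normSq_eq_norm_sq, U2, hmR]
      rw [← Complex.ofReal_mul, Complex.ofReal_re]
      ring
  have I : ∀ j : ℕ, IntegrableOn (fun x : Pt => ‖x‖ ^ (2 * j)) B1 := fun j => by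
    have : IntegrableOn (fun x : Pt => ‖x‖ ^ (2 * j)) (Metric.closedBall 0 1) :=
      ContinuousOn.integrableOn_compact (isCompact_closedBall 0 1) (by fun_prop)
    exact this.mono_set Metric.ball_subset_closedBall
  have diff : Differentiable ℝ Ψ := by
    intro x
    rcases eq_or_ne x 0 with rfl | hx
    · exact d0.differentiableAt
    · obtain ⟨L, hL, hv⟩ := tri_deriv c a b hx
      exact hL.differentiableAt
  have adm : gpAdm Ψ := by
    refine ⟨diff.differentiableOn, ?_, ?_, ?_, ?_, ?_⟩
    · simp only [U2]; exact (I _).const_mul _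
    · simp only [T]; exact (I _).const_mul _
    · simp only [U4]; exact (I _).const_mul _
    · simp only [J]; exact (I _).const_mul _
    · simp only [U2]
      rw [integral_const_mul, ball_radial, hc2]
      field_simp
  refine (ground_le ε Ω Ψ adm).trans (le_of_eq ?_)
  rw [gpEnergy]
  simp only [gpDensity, U4, T, J]
  rw [integral_add, integral_sub, integral_const_mul, integral_const_mul, integral_div, integral_const_mul,
    integral_const_mul, ball_radial, ball_radial, ball_radial, show c ^ 4 = (c ^ 2) ^ 2 by ring, hc2]
  · push_cast
    field_simp
  · exact (I _).const_mul _
  · exact ((I _).const_mul _).const_mul _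
  · exact ((I _).const_mul _).sub (((I _).const_mul _).const_mul _)
  · exact ((I _).const_mul _).div_const _

set_option maxHeartbeats 2000000 in
lemma energy_bd {ε X Ω₁ Ω : ℝ} (hε : 0 < ε) (hε1 : ε ≤ 1) (hX : 0 < X) (hΩ₁ : 0 < Ω₁) (h1 : X ≤ 1 / 64)
    (h2 : X ≤ Ω₁ ^ 2 / 704) (h3 : X ≤ Ω₁ / 4) (hΩ : Ω * (ε * X ^ 4) = Ω₁) :
    gpGround ε Ω ≤ -(Ω ^ 2 / 4) + Ω ^ 2 * X / 32 := by
  have hΩp : 0 < Ω := by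
    by_contra h
    have : Ω * (ε * X ^ 4) ≤ 0 := mul_nonpos_of_nonpos_of_nonneg (not_lt.1 h) (by positivity)
    linarith
  set V := (X ^ 2)⁻¹ with hV
  have hVX : V * X ^ 2 = 1 := inv_mul_cancel₀ (by positivity)
  have hV1 : 4096 ≤ V := by
    rw [hV, le_inv_comm₀ (by norm_num) (by positivity)]
    nlinarith
  set p := ⌈V⌉₊ with hpdef
  have p1 : V ≤ p := Nat.le_ceil V
  have p2 : (p : ℝ) < V + 1 := Nat.ceil_lt_add_one (by linarith)
  have hp2 : 2 ≤ p := by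
    have : (2:ℝ) ≤ p := by linarith
    exact_mod_cast this
  have hpΩ : (p : ℝ) ≤ Ω / 2 := by
    have a : 4 * (ε * X ^ 2) ≤ Ω₁ := by
      have : ε * X ^ 2 ≤ X := by nlinarith [mul_le_mul hε1 (by nlinarith : X ^ 2 ≤ X) (by positivity) zero_le_one]
      linarith
    have b : 4 * V ≤ Ω := by
      refine le_of_mul_le_mul_right ?_ (by positivity : 0 < ε * X ^ 4)
      rw [hΩ]
      calc 4 * V * (ε * X ^ 4) = 4 * (ε * X ^ 2) * (V * X ^ 2) := by ring
        _ ≤ Ω₁ := by rw [hVX]; linarith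
    linarith
  set k := ⌊(Ω / 2 - p) / 2⌋₊ with hk
  have k1 : (k : ℝ) ≤ (Ω / 2 - p) / 2 := Nat.floor_le (by linarith)
  have k2 : (Ω / 2 - p) / 2 < k + 1 := Nat.lt_floor_add_one _
  refine (trial ε Ω hp2 k).trans ?_
  set m : ℝ := (p : ℝ) + 2 * k with hm
  have m1 : m ≤ Ω / 2 := by linarith
  have m2 : Ω / 2 - 2 < m := by linarith
  have m0 : 0 ≤ m := by positivity
  have pp : (0:ℝ) < p := by linarith
  have s1 : (m - Ω / 2) ^ 2 ≤ 4 := by nlinarith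
  have s2 : m ^ 2 / p ≤ Ω ^ 2 * X ^ 2 / 4 := by
    rw [div_le_iff₀ pp]
    have : m ^ 2 ≤ Ω ^ 2 / 4 := by nlinarith
    have : 1 ≤ X ^ 2 * p := by nlinarith [sq_nonneg X]
    nlinarith [sq_nonneg Ω]
  have hV2 : 1 ≤ V ^ 2 := by nlinarith
  have hei : 1 ≤ 1 / ε ^ 2 := by
    rw [le_div_iff₀ (by positivity)]; nlinarith
  have s3 : ((p : ℝ) + 1) ^ 2 / (π * (2 * p + 1)) / ε ^ 2 ≤ V ^ 2 * (1 / ε ^ 2) := by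
    rw [div_eq_mul_one_div]
    refine mul_le_mul_of_nonneg_right ?_ (by positivity)
    rw [div_le_iff₀ (by positivity)]
    have : 3 * (2 * (p:ℝ) + 1) ≤ π * (2 * p + 1) := by
      have := pi_gt_three
      nlinarith
    have a : V ^ 2 * (3 * (2 * (p:ℝ) + 1)) ≤ V ^ 2 * (π * (2 * p + 1)) :=
      mul_le_mul_of_nonneg_left this (by positivity)
    refine le_trans ?_ a
    have : (p : ℝ) + 1 ≤ 2 * V := by linarith
    have : ((p : ℝ) + 1) ^ 2 ≤ (2 * V) ^ 2 := by gcongr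
    have hh : V ^ 2 * 4 ≤ V ^ 2 * (3 * (2 * (p:ℝ) + 1)) :=
      mul_le_mul_of_nonneg_left (by linarith) (by positivity)
    linarith
  have s4 : (p:ℝ) ^ 2 + p + 4 ≤ 10 * V ^ 2 * (1 / ε ^ 2) := by
    have : (p:ℝ) ≤ 2 * V := by linarith
    have hpp : (p:ℝ) ^ 2 ≤ (2 * V) ^ 2 := by gcongr
    have hVV : V ≤ V ^ 2 := le_self_pow₀ (by linarith) (by norm_num)
    have : (p:ℝ) ^ 2 + p + 4 ≤ 10 * V ^ 2 := by linarith
    exact this.trans (le_mul_of_one_le_right (by positivity) hei)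
  have s5 : 11 * (V ^ 2 * (1 / ε ^ 2)) ≤ Ω ^ 2 * X / 64 := by
    have e : V ^ 2 * (1 / ε ^ 2) * Ω₁ ^ 2 = Ω ^ 2 * X ^ 4 := by
      rw [← hΩ]
      field_simp
      calc _ = (V * X ^ 2) ^ 2 := by ring
        _ = _ := by rw [hVX]; ring
    have hX3 : X ^ 3 ≤ X := by nlinarith [sq_nonneg X]
    have hX3' : 704 * X ^ 3 ≤ Ω₁ ^ 2 := by linarith
    refine le_of_mul_le_mul_right ?_ (by positivity : 0 < Ω₁ ^ 2)
    calc 11 * (V ^ 2 * (1 / ε ^ 2)) * Ω₁ ^ 2 = 11 * (Ω ^ 2 * X ^ 4) := by rw [← e]; ring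
      _ = Ω ^ 2 * X / 64 * (704 * X ^ 3) := by ring
      _ ≤ _ := mul_le_mul_of_nonneg_left hX3' (by positivity)
  have s6 : Ω ^ 2 * X ^ 2 / 4 ≤ Ω ^ 2 * X / 64 := by
    have : X ^ 2 ≤ X / 64 := by nlinarith
    nlinarith [sq_nonneg Ω]
  have e : ((p : ℝ) + 1) / p * ((p : ℝ) ^ 2 + m ^ 2) - Ω * m =
      p ^ 2 + p + m ^ 2 / p + (m - Ω / 2) ^ 2 - Ω ^ 2 / 4 := by
    field_simp
    ring
  rw [e]
  linarith

lemma pt_bound {ε Ω Y : ℝ} {Ψ : Pt → ℂ} (h : IsGPMinimizer ε Ω Ψ) (hΩ : 0 < Ω) (hY : 0 < Y) (hY1 : Y ≤ 1)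
    (hE : gpGround ε Ω ≤ -(Ω ^ 2 / 4) + Ω ^ 2 * Y / 32) (hbig : 6 ≤ Ω * Y / 4 * Y) {x : Pt} (hx : ‖x‖ ≤ 1 - Y) :
    ‖Ψ x‖ ^ 2 ≤ 4 / 9 * (Ω * Y / 4) ^ 2 * exp (-(Ω * Y / 4 * (1 - Y - ‖x‖) / 6 + Ω * Y / 4 * Y / 12)) := by
  set K := Ω * Y / 4 with hK
  have Kp : 0 < K := by positivity
  have hen := energy_lower ε Ω Ψ h.1
  have hEq := h.2
  have hμ : (gpEnergy ε Ω Ψ + (∫ x in B1, ‖Ψ x‖ ^ 4) / ε ^ 2) + Ω ^ 2 * (1 - Y / 2) ^ 2 / 4 ≤ -K ^ 2 := by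
    have a : (∫ x in B1, ‖Ψ x‖ ^ 4) / ε ^ 2 ≤ Ω ^ 2 * Y / 32 := by linarith
    have b : Ω ^ 2 * (1 - Y / 2) ^ 2 ≤ Ω ^ 2 * (1 - 3 * Y / 4) :=
      mul_le_mul_of_nonneg_left (by nlinarith) (by positivity)
    have c : K ^ 2 ≤ Ω ^ 2 * Y / 16 := by
      rw [hK]
      have : Ω ^ 2 * Y ^ 2 ≤ Ω ^ 2 * Y := mul_le_mul_of_nonneg_left (by nlinarith) (by positivity)
      nlinarith
    nlinarith [sq_nonneg Ω, mul_pos (pow_pos hΩ 2) hY]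
  set w := (1 - Y / 2 - ‖x‖) * K / 3 with hw
  have w1 : 1 ≤ w := by
    rw [hw, le_div_iff₀ (by norm_num)]
    have : Y / 2 * K ≤ (1 - Y / 2 - ‖x‖) * K := mul_le_mul_of_nonneg_right (by linarith) Kp.le
    linarith
  have hfl := Nat.floor_le (zero_le_one.trans w1)
  have hfl2 := Nat.lt_floor_add_one w
  have hf1 : 1 ≤ ⌊w⌋₊ := Nat.le_floor (by simpa using w1)
  obtain ⟨N, hN⟩ : ∃ N, ⌊w⌋₊ = N + 1 := ⟨⌊w⌋₊ - 1, by omega⟩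
  rw [hN] at hfl hfl2
  push_cast at hfl hfl2
  have hd := decay h (by linarith : 1 - Y / 2 < 1) Kp hμ N x (by
    have : ((N:ℝ) + 1) * (3 / K) ≤ w * (3 / K) := mul_le_mul_of_nonneg_right hfl (by positivity)
    have e : w * (3 / K) = 1 - Y / 2 - ‖x‖ := by rw [hw]; field_simp
    linarith)
  have ex : exp (w / 2) ≤ 2 ^ (N + 2) := by
    have a : exp (1 / 2) ≤ 2 := by
      have : exp (1 / 2) ^ 2 ≤ 2 ^ 2 := by
        rw [← exp_nat_mul]
        have := exp_one_lt_d9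
        norm_num; linarith
      exact le_of_sq_le_sq this (by norm_num)
    calc exp (w / 2) ≤ exp ((N + 2 : ℕ) * (1 / 2)) := exp_le_exp.2 (by push_cast; linarith)
      _ = exp (1 / 2) ^ (N + 2) := by rw [exp_nat_mul]
      _ ≤ 2 ^ (N + 2) := by gcongr
  have e1 : K * (1 - Y - ‖x‖) / 6 + K * Y / 12 = w / 2 := by rw [hw]; ring
  rw [e1]
  refine hd.trans ?_
  have e2 : exp (-(w / 2)) * exp (w / 2) = 1 := by rw [← exp_add]; simp
  rw [div_le_iff₀ (by positivity)]
  have : 4 / 9 * K ^ 2 * exp (-(w / 2)) * 2 ^ N = K ^ 2 / 9 * (exp (-(w / 2)) * 2 ^ (N + 2)) := by ring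
  rw [this]
  have h1 : 1 ≤ exp (-(w / 2)) * 2 ^ (N + 2) := by
    rw [← e2]; gcongr
  nlinarith [sq_nonneg K]

set_option maxHeartbeats 2000000 in
theorem stmt19 (Ω₁ α : ℝ) (hΩ : 0 < Ω₁) (hα : 0 < α) (hα2 : α < 2) :
    ∃ (C C' ε₀ : ℝ), 0 < C ∧ 0 < C' ∧ 0 < ε₀ ∧ ∀ ε : ℝ, 0 < ε → ε < ε₀ →
      ∀ Ψ : Pt → ℂ, IsGPMinimizer ε (Ω₁ / ε ^ (1 + α)) Ψ →
        ∀ x : Pt, ‖x‖ ≤ 1 - ε ^ (min α (2 - α) / 4) →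
          ‖Ψ x‖ ^ 2 ≤ C * ε ^ (min α (2 - α) / 3) * |Real.log ε| *
            Real.exp (-(C' * ((1 - ε ^ (min α (2 - α) / 4)) - ‖x‖) ^ 2 /
              ε ^ (1 + min α (2 - α) / 2))) := by
  set β := min α (2 - α) with hβ
  have hβ0 : 0 < β := lt_min hα (by linarith)
  have hβα : β ≤ α := min_le_left _ _
  have hβ1 : β ≤ 1 := by
    rcases le_total α 1 with h | h
    · exact hβα.trans h
    · exact (min_le_right _ _).trans (by linarith)
  set δ := min (1 / 64) (min (Ω₁ ^ 2 / 704) (Ω₁ / 4)) with hδ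
  have hδ0 : 0 < δ := by positivity
  refine ⟨4 / 9 * (Ω₁ / 4) ^ 2 * (5040 * (48 / Ω₁) ^ 7), Ω₁ / 24,
    min (δ ^ (4 / α)) (min (1 / 3) (Ω₁ / 24)), by positivity, by positivity, by positivity, ?_⟩
  intro ε hε hεe Ψ hΨ x hx
  have E1 : ε < δ ^ (4 / α) := hεe.trans_le (min_le_left _ _)
  have E2 : ε < 1 / 3 := hεe.trans_le ((min_le_right _ _).trans (min_le_left _ _))
  have E3 : ε < Ω₁ / 24 := hεe.trans_le ((min_le_right _ _).trans (min_le_right _ _))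
  have hε1 : ε ≤ 1 := by linarith
  set X := ε ^ (α / 4) with hXdef
  set Y := ε ^ (β / 4) with hYdef
  set Ω := Ω₁ / ε ^ (1 + α) with hΩdef
  have X0 : 0 < X := rpow_pos_of_pos hε _
  have Y0 : 0 < Y := rpow_pos_of_pos hε _
  have Y1 : Y ≤ 1 := rpow_le_one hε.le hε1 (by positivity)
  have XY : X ≤ Y := rpow_le_rpow_of_exponent_ge hε hε1 (by linarith)
  have Xδ : X ≤ δ := by
    have : X ≤ (δ ^ (4 / α)) ^ (α / 4) := rpow_le_rpow hε.le E1.le (by positivity)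
    rwa [← rpow_mul hδ0.le, show 4 / α * (α / 4) = 1 by field_simp, rpow_one] at this
  have Ω0 : 0 < Ω := by positivity
  have hrel : Ω * (ε * X ^ 4) = Ω₁ := by
    have : ε * X ^ 4 = ε ^ (1 + α) := by
      rw [hXdef, ← rpow_natCast, ← rpow_mul hε.le, rpow_add hε, rpow_one]
      congr 2; push_cast; ring
    rw [this, hΩdef]
    have : 0 < ε ^ (1 + α) := rpow_pos_of_pos hε _
    field_simp
  have hE := energy_bd hε hε1 X0 hΩ (Xδ.trans (min_le_left _ _))
    (Xδ.trans ((min_le_right _ _).trans (min_le_left _ _)))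
    (Xδ.trans ((min_le_right _ _).trans (min_le_right _ _))) hrel
  have hE' : gpGround ε Ω ≤ -(Ω ^ 2 / 4) + Ω ^ 2 * Y / 32 := by
    have : Ω ^ 2 * X ≤ Ω ^ 2 * Y := mul_le_mul_of_nonneg_left XY (by positivity)
    linarith
  have KY : Ω₁ / (4 * ε) ≤ Ω * Y / 4 * Y := by
    have : ε ^ (1 + α) ≤ ε * (Y * Y) := by
      rw [hYdef, ← rpow_add hε, rpow_add hε, rpow_one]
      exact mul_le_mul_of_nonneg_left (rpow_le_rpow_of_exponent_ge hε hε1 (by linarith)) hε.le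
    rw [hΩdef, div_le_iff₀ (by positivity)]
    have hp : 0 < ε ^ (1 + α) := rpow_pos_of_pos hε _
    have : Ω₁ / ε ^ (1 + α) * Y / 4 * Y * (4 * ε) = Ω₁ * (ε * (Y * Y) / ε ^ (1 + α)) := by ring
    rw [this]
    have : 1 ≤ ε * (Y * Y) / ε ^ (1 + α) := by rw [le_div_iff₀ hp]; linarith
    nlinarith
  have hbig : 6 ≤ Ω * Y / 4 * Y := by
    refine le_trans ?_ KY
    rw [le_div_iff₀ (by positivity)]; linarith
  have main := pt_bound hΨ Ω0 Y0 Y1 hE' hbig hx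
  set K := Ω * Y / 4 with hK
  have K0 : 0 < K := by positivity
  have Kup : K * ε ^ 3 ≤ Ω₁ / 4 := by
    have a : ε ^ 3 ≤ ε ^ (1 + α) := by
      rw [← rpow_natCast]
      exact rpow_le_rpow_of_exponent_ge hε hε1 (by push_cast; linarith)
    have hp : 0 < ε ^ (1 + α) := rpow_pos_of_pos hε _
    have b : Ω * ε ^ (1 + α) = Ω₁ := by rw [hΩdef]; field_simp
    have c : Ω * ε ^ 3 ≤ Ω₁ := by rw [← b]; gcongr
    have : Ω * ε ^ 3 * Y ≤ Ω₁ * 1 := by gcongr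
    rw [hK]; linarith
  have Klow : Ω₁ / 4 / ε ^ (1 + β / 2) ≤ K := by
    have hp : 0 < ε ^ (1 + α) := rpow_pos_of_pos hε _
    have hq : 0 < ε ^ (1 + β / 2) := rpow_pos_of_pos hε _
    have a : ε ^ (1 + α) ≤ Y * ε ^ (1 + β / 2) := by
      rw [hYdef, ← rpow_add hε]
      exact rpow_le_rpow_of_exponent_ge hε hε1 (by linarith)
    have b : Ω * ε ^ (1 + α) = Ω₁ := by rw [hΩdef]; field_simp
    rw [div_le_iff₀ hq, hK, ← b]
    nlinarith
  set d := 1 - Y - ‖x‖ with hd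
  have d0 : 0 ≤ d := by linarith
  have d1 : d ≤ 1 := by have := norm_nonneg x; linarith
  have ex1 : exp (-(K * d / 6)) ≤ exp (-(Ω₁ / 24 * d ^ 2 / ε ^ (1 + β / 2))) := by
    refine exp_le_exp.2 (neg_le_neg ?_)
    have a : d ^ 2 ≤ d := by nlinarith
    have hq : 0 < ε ^ (1 + β / 2) := rpow_pos_of_pos hε _
    calc Ω₁ / 24 * d ^ 2 / ε ^ (1 + β / 2) = (Ω₁ / 4 / ε ^ (1 + β / 2)) * d ^ 2 / 6 := by ring
      _ ≤ K * d / 6 := by gcongr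
  have ex2 : K ^ 2 * exp (-(K * Y / 12)) ≤ (Ω₁ / 4) ^ 2 * (5040 * (48 / Ω₁) ^ 7) * ε := by
    have y1 : Ω₁ / (48 * ε) ≤ K * Y / 12 := by
      have : Ω₁ / (48 * ε) = Ω₁ / (4 * ε) / 12 := by field_simp; norm_num
      rw [this]; linarith
    have y2 := pow_div_factorial_le_exp (K * Y / 12) (by positivity) 7
    have y3 : (Ω₁ / (48 * ε)) ^ 7 / 5040 ≤ exp (K * Y / 12) := by
      refine le_trans ?_ y2
      norm_num [Nat.factorial]
      gcongr
    rw [exp_neg, ← div_eq_mul_inv, div_le_iff₀ (exp_pos _)]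
    have k2 : (K * ε ^ 3) ^ 2 ≤ (Ω₁ / 4) ^ 2 := by gcongr
    have : (Ω₁ / 4) ^ 2 * (5040 * (48 / Ω₁) ^ 7) * ε * ((Ω₁ / (48 * ε)) ^ 7 / 5040) = (Ω₁ / 4) ^ 2 / ε ^ 6 := by
      field_simp
    calc K ^ 2 = (K * ε ^ 3) ^ 2 / ε ^ 6 := by field_simp
      _ ≤ (Ω₁ / 4) ^ 2 / ε ^ 6 := by gcongr
      _ = _ := this.symm
      _ ≤ _ := by gcongr
  have lg : 1 ≤ |Real.log ε| := by
    have : Real.log ε ≤ -1 := by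
      rw [log_le_iff_le_exp hε, exp_neg]
      have h3 := exp_one_lt_d9
      have : (1 / 3 : ℝ) ≤ (exp 1)⁻¹ := by
        rw [le_inv_comm₀ (by norm_num) (exp_pos _)]
        norm_num; linarith
      linarith
    rw [abs_of_nonpos (by linarith)]; linarith
  have epow : ε ≤ ε ^ (β / 3) := by
    have := rpow_le_rpow_of_exponent_ge hε hε1 (by linarith : β / 3 ≤ 1)
    rwa [rpow_one] at this
  rw [neg_add, exp_add] at main
  refine main.trans ?_
  calc 4 / 9 * K ^ 2 * (exp (-(K * d / 6)) * exp (-(K * Y / 12)))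
      = 4 / 9 * (K ^ 2 * exp (-(K * Y / 12))) * exp (-(K * d / 6)) := by ring
    _ ≤ 4 / 9 * ((Ω₁ / 4) ^ 2 * (5040 * (48 / Ω₁) ^ 7) * (ε ^ (β / 3) * |Real.log ε|)) *
        exp (-(Ω₁ / 24 * d ^ 2 / ε ^ (1 + β / 2))) := by
      have hh : ε ≤ ε ^ (β / 3) * |Real.log ε| := by
        have hp : 0 < ε ^ (β / 3) := rpow_pos_of_pos hε _
        nlinarith
      have h5 : K ^ 2 * exp (-(K * Y / 12)) ≤
          (Ω₁ / 4) ^ 2 * (5040 * (48 / Ω₁) ^ 7) * (ε ^ (β / 3) * |Real.log ε|) :=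
        ex2.trans (mul_le_mul_of_nonneg_left hh (by positivity))
      exact mul_le_mul (mul_le_mul_of_nonneg_left h5 (by norm_num)) ex1 (exp_pos _).le (by positivity)
    _ = _ := by ring
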